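/- Let n ≥ 1 be an integer, δ ∈ (0, n], α, β ∈ [0, ∞), b ∈ L^∞(ℝⁿ, ℋ^δ_∞), and g₁, g₂ ∈ L¹_loc(ℝⁿ, ℋ^δ_∞). Suppose M_{ℋ^δ_∞} gᵢ(x) < ∞ for ℋ^δ_∞-a.e. x ∈ ℝⁿ for i = 1, 2, and that the function x ↦ e^{b(x)} (M_{ℋ^δ_∞} g₁(x))^α (M_{ℋ^δ_∞} g₂(x))^β is ℋ^δ_∞-quasicontinuous. Then the function x ↦ α · ln(M_{ℋ^δ_∞} g₁(x)) + β · ln(M_{ℋ^δ_∞} g₂(x)) + b(x) belongs to BMO(ℝⁿ, ℋ^δ_∞). -/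

import Mathlib

open scoped ENNReal
open Set MeasureTheory

noncomputable section

/-- An axis-parallel cube in `ℝⁿ`, described by its lower corner and positive side length. -/
structure Cube (n : ℕ) where
  corner : Fin n → ℝ
  side : ℝ
  side_pos : 0 < side

namespace Cube

/-- The half-open cube `∏ᵢ [cornerᵢ, cornerᵢ + side)` as a set of points. -/
def toSet {n : ℕ} (Q : Cube n) : Set (Fin n → ℝ) :=
  {x | ∀ i, Q.corner i ≤ x i ∧ x i < Q.corner i + Q.side}

/-- A cube is dyadic if it has the form `2^k·(z + [0,1)ⁿ)` with `k ∈ ℤ`, `z ∈ ℤⁿ`. -/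
def IsDyadic {n : ℕ} (Q : Cube n) : Prop :=
  ∃ (k : ℤ) (z : Fin n → ℤ), Q.side = (2:ℝ) ^ k ∧ ∀ i, Q.corner i = (z i : ℝ) * (2:ℝ) ^ k

/-- `Q'` is a dyadic subcube of `Q`, i.e. obtained from `Q` by repeated bisection. -/
def IsDyadicSubcube {n : ℕ} (Q' Q : Cube n) : Prop :=
  ∃ (k : ℕ) (z : Fin n → ℕ), (∀ i, z i < 2 ^ k) ∧
    Q'.side = Q.side / 2 ^ k ∧ ∀ i, Q'.corner i = Q.corner i + (z i : ℝ) * (Q.side / 2 ^ k)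

/-- The concentric dilate `t·Q` of a cube. -/
def dilate {n : ℕ} (Q : Cube n) (t : ℝ) (ht : 0 < t) : Cube n :=
  ⟨fun i => Q.corner i + Q.side / 2 - t * Q.side / 2, t * Q.side, mul_pos ht Q.side_pos⟩

end Cube

/-- The Hausdorff content `ℋ^δ_∞`. -/
def hContent (n : ℕ) (δ : ℝ) (E : Set (Fin n → ℝ)) : ℝ≥0∞ :=
  ⨅ (Qs : ℕ → Cube n) (_ : E ⊆ ⋃ i, (Qs i).toSet), ∑' i, ENNReal.ofReal ((Qs i).side ^ δ)

/-- The dyadic Hausdorff content `~ℋ^δ_∞`. -/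
def dContent (n : ℕ) (δ : ℝ) (E : Set (Fin n → ℝ)) : ℝ≥0∞ :=
  ⨅ (Qs : ℕ → Cube n) (_ : (∀ i, (Qs i).IsDyadic) ∧ E ⊆ ⋃ i, (Qs i).toSet),
    ∑' i, ENNReal.ofReal ((Qs i).side ^ δ)

/-- The Choquet integral `∫_E f dℋ^δ_∞`. -/
def integH (n : ℕ) (δ : ℝ) (f : (Fin n → ℝ) → ℝ) (E : Set (Fin n → ℝ)) : ℝ≥0∞ :=
  ∫⁻ t in Ioi (0:ℝ), hContent n δ {x | x ∈ E ∧ t < f x}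

/-- The Choquet integral `∫_E f d~ℋ^δ_∞` w.r.t. the dyadic Hausdorff content. -/
def integD (n : ℕ) (δ : ℝ) (f : (Fin n → ℝ) → ℝ) (E : Set (Fin n → ℝ)) : ℝ≥0∞ :=
  ∫⁻ t in Ioi (0:ℝ), dContent n δ {x | x ∈ E ∧ t < f x}

/-- A property holds `ℋ^δ_∞`-a.e. -/
def AEContent (n : ℕ) (δ : ℝ) (P : (Fin n → ℝ) → Prop) : Prop :=
  hContent n δ {x | ¬ P x} = 0

/-- `ℋ^δ_∞`-quasicontinuity. -/
def QuasiCont (n : ℕ) (δ : ℝ) (f : (Fin n → ℝ) → ℝ) : Prop :=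
  ∀ ε : ℝ, 0 < ε → ∃ O : Set (Fin n → ℝ),
    IsOpen O ∧ hContent n δ O < ENNReal.ofReal ε ∧ ContinuousOn f Oᶜ

/-- `L¹_loc(ℝⁿ, ℋ^δ_∞)`. -/
def MemL1loc (n : ℕ) (δ : ℝ) (f : (Fin n → ℝ) → ℝ) : Prop :=
  QuasiCont n δ f ∧ ∀ K : Set (Fin n → ℝ), IsCompact K → integH n δ (fun x => |f x|) K < ⊤

/-- `L^∞(ℝⁿ, ℋ^δ_∞)`. -/
def MemLinf (n : ℕ) (δ : ℝ) (f : (Fin n → ℝ) → ℝ) : Prop :=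
  QuasiCont n δ f ∧ ∃ M : ℝ, AEContent n δ (fun x => |f x| ≤ M)

/-- The `BMO(ℝⁿ, ℋ^δ_∞)` seminorm. -/
def bmoNorm (n : ℕ) (δ : ℝ) (f : (Fin n → ℝ) → ℝ) : ℝ≥0∞ :=
  ⨆ Q : Cube n, ⨅ c : ℝ,
    integH n δ (fun x => |f x - c|) Q.toSet / hContent n δ Q.toSet

/-- Membership in `BMO(ℝⁿ, ℋ^δ_∞)`. -/
def MemBMO (n : ℕ) (δ : ℝ) (f : (Fin n → ℝ) → ℝ) : Prop :=
  MemL1loc n δ f ∧ bmoNorm n δ f < ⊤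

/-- `essinf_{x ∈ Q} f := inf {t ∈ (0,∞) : ℋ^δ_∞({x ∈ Q : f x < t}) > 0}`. -/
def essInfQ (n : ℕ) (δ : ℝ) (f : (Fin n → ℝ) → ℝ) (Q : Cube n) : ℝ :=
  sInf {t : ℝ | 0 < t ∧ 0 < hContent n δ {x | x ∈ Q.toSet ∧ f x < t}}

/-- The `BLO(ℝⁿ, ℋ^δ_∞)` seminorm. -/
def bloNorm (n : ℕ) (δ : ℝ) (f : (Fin n → ℝ) → ℝ) : ℝ≥0∞ :=
  ⨆ Q : Cube n,
    integH n δ (fun x => |f x - essInfQ n δ f Q|) Q.toSet / hContent n δ Q.toSet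

/-- Membership in `BLO(ℝⁿ, ℋ^δ_∞)`. -/
def MemBLO (n : ℕ) (δ : ℝ) (f : (Fin n → ℝ) → ℝ) : Prop :=
  MemL1loc n δ f ∧ bloNorm n δ f < ⊤

/-- A weight: locally Choquet-integrable, quasicontinuous, positive `ℋ^δ_∞`-a.e. -/
def IsWeight (n : ℕ) (δ : ℝ) (w : (Fin n → ℝ) → ℝ) : Prop :=
  MemL1loc n δ w ∧ AEContent n δ (fun x => 0 < w x)

/-- The capacitary Muckenhoupt `A_{p,δ}` constant, for `p > 1`. -/
def apConst (n : ℕ) (δ p : ℝ) (w : (Fin n → ℝ) → ℝ) : ℝ≥0∞ :=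
  ⨆ Q : Cube n,
    (integH n δ w Q.toSet / hContent n δ Q.toSet) *
      (integH n δ (fun x => w x ^ (-(1 / (p - 1)))) Q.toSet / hContent n δ Q.toSet) ^ (p - 1)

/-- Membership in `A_{p,δ}`, `p > 1`. -/
def MemAp (n : ℕ) (δ p : ℝ) (w : (Fin n → ℝ) → ℝ) : Prop :=
  IsWeight n δ w ∧ apConst n δ p w < ⊤

/-- The Hardy–Littlewood maximal operator w.r.t. `ℋ^δ_∞`. -/
def maxOp (n : ℕ) (δ : ℝ) (g : (Fin n → ℝ) → ℝ) (x : Fin n → ℝ) : ℝ≥0∞ :=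
  ⨆ (Q : Cube n) (_ : x ∈ Q.toSet),
    integH n δ (fun y => |g y|) Q.toSet / hContent n δ Q.toSet

/-- The capacitary `A_{1,δ}` constant. -/
def a1Const (n : ℕ) (δ : ℝ) (w : (Fin n → ℝ) → ℝ) : ℝ≥0∞ :=
  sInf {c : ℝ≥0∞ | 0 < c ∧
    AEContent n δ (fun x => maxOp n δ w x ≤ c * ENNReal.ofReal (w x))}

/-- Membership in `A_{1,δ}`. -/
def MemA1 (n : ℕ) (δ : ℝ) (w : (Fin n → ℝ) → ℝ) : Prop :=
  IsWeight n δ w ∧ a1Const n δ w < ⊤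

/-- The `A_{p,δ}` constant for `p ∈ [1,∞)` (it is the `A_{1,δ}` constant when `p = 1`). -/
def apConstGen (n : ℕ) (δ p : ℝ) (w : (Fin n → ℝ) → ℝ) : ℝ≥0∞ :=
  if p = 1 then a1Const n δ w else apConst n δ p w

/-- Membership in `A_{p,δ}` for `p ∈ [1,∞)` (meaning `A_{1,δ}` when `p = 1`). -/
def MemApGen (n : ℕ) (δ p : ℝ) (w : (Fin n → ℝ) → ℝ) : Prop :=
  IsWeight n δ w ∧ apConstGen n δ p w < ⊤

/-- The weighted `BMO^q_w(ℝⁿ, ℋ^δ_∞)` seminorm. -/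
def bmoWNorm (n : ℕ) (δ q : ℝ) (w f : (Fin n → ℝ) → ℝ) : ℝ≥0∞ :=
  ⨆ Q : Cube n, ⨅ c : ℝ,
    (integH n δ (fun x => |f x - c| ^ q * w x) Q.toSet / integH n δ w Q.toSet) ^ (1 / q)

/-- Membership in `BMO^q_w(ℝⁿ, ℋ^δ_∞)`. -/
def MemBMOw (n : ℕ) (δ q : ℝ) (w f : (Fin n → ℝ) → ℝ) : Prop :=
  QuasiCont n δ f ∧
    (∀ K : Set (Fin n → ℝ), IsCompact K → integH n δ (fun x => |f x| ^ q * w x) K < ⊤) ∧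
    bmoWNorm n δ q w f < ⊤

/-- The integral average `f_{Q,δ}` with respect to the dyadic Hausdorff content. -/
def avgQ (n : ℕ) (δ : ℝ) (f : (Fin n → ℝ) → ℝ) (Q : Cube n) : ℝ :=
  ((integD n δ f (Q.toSet ∩ {x | 0 ≤ f x})).toReal -
      (integD n δ (fun x => -f x) (Q.toSet ∩ {x | f x < 0})).toReal) /
    ((dContent n δ (Q.toSet ∩ {x | 0 ≤ f x})).toReal +
      (dContent n δ (Q.toSet ∩ {x | f x < 0})).toReal)

/-!
`BMO(ℝⁿ, ℋ^δ_∞)` is a vector space containing `L^∞(ℝⁿ, ℋ^δ_∞)`, so it suffices that `ln (M g)` lies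
in it as soon as `M g` is finite almost everywhere.

*Oscillation.* The content is not additive, but covering the dyadic superlevel sets of `g` by
countably many cubes and comparing with a disjoint Vitali subfamily still gives a weak type `(1, 1)`
bound for `M`. On a cube `Q`, the values of `M g` far above `m = inf_Q M g` come from averages over
cubes inside `3Q`, so the weak type bound yields `ℋ^δ_∞ {x ∈ Q : M g x > m eᵗ} ≲ e⁻ᵗ ℓ(Q)^δ`, and
integration in `t` bounds the oscillation of `ln (M g)` around `ln m`.

*Quasicontinuity.* `M g` is always lower semicontinuous. The weak type bound and approximation by
continuous functions show that the mean oscillation of a quasicontinuous `g` vanishes on small cubes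
not contained in an open set of small content; this makes `M g` upper semicontinuous off that set.
-/

namespace Cube

variable {n : ℕ} {δ t : ℝ} {P Q : Cube n} {x y : Fin n → ℝ}

/-- The contribution `ℓ(Q)^δ` of a cube to the covering sums defining `ℋ^δ_∞`, and, for `δ ≤ n`,
its content. -/
def weight (δ : ℝ) (Q : Cube n) : ℝ≥0∞ := ENNReal.ofReal (Q.side ^ δ)

/-- The concentric cube `3Q`; it contains every cube that meets `Q` and is not larger than `Q`. -/
abbrev triple (Q : Cube n) : Cube n := Q.dilate 3 three_pos

lemma weight_ne_zero : Q.weight δ ≠ 0 :=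
  (ENNReal.ofReal_pos.2 (Real.rpow_pos_of_pos Q.side_pos δ)).ne'

lemma weight_ne_top : Q.weight δ ≠ ⊤ := ENNReal.ofReal_ne_top

lemma weight_le_weight (hδ : 0 ≤ δ) (h : P.side ≤ Q.side) : P.weight δ ≤ Q.weight δ :=
  ENNReal.ofReal_le_ofReal (Real.rpow_le_rpow P.side_pos.le h hδ)

lemma weight_dilate (Q : Cube n) (ht : 0 < t) :
    (Q.dilate t ht).weight δ = ENNReal.ofReal (t ^ δ) * Q.weight δ := by
  simp only [weight, dilate, Real.mul_rpow ht.le Q.side_pos.le]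
  exact ENNReal.ofReal_mul (by positivity)

lemma weight_natCast (Q : Cube n) :
    Q.weight n = ENNReal.ofReal (Q.side ^ (n - δ)) * Q.weight δ := by
  simp only [weight]
  rw [← ENNReal.ofReal_mul (Real.rpow_pos_of_pos Q.side_pos _).le, ← Real.rpow_add Q.side_pos,
    sub_add_cancel]

lemma exists_weight_eq (n : ℕ) (hδ : δ ≠ 0) {e : ℝ} (he : 0 < e) :
    ∃ Q : Cube n, Q.weight δ = ENNReal.ofReal e :=
  ⟨⟨0, e ^ δ⁻¹, by positivity⟩, by simp only [weight, Real.rpow_inv_rpow he.le hδ]⟩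

lemma exists_tsum_weight_lt (n : ℕ) (hδ : δ ≠ 0) {ε : ℝ≥0∞} (hε : ε ≠ 0) :
    ∃ P : ℕ → Cube n, ∑' i, (P i).weight δ < ε := by
  obtain ⟨e, he, hsum⟩ := ENNReal.exists_pos_sum_of_countable hε ℕ
  choose P hP using fun i => exists_weight_eq n hδ (NNReal.coe_pos.2 (he i))
  exact ⟨P, by simpa only [hP, ENNReal.ofReal_coe_nnreal] using hsum⟩

lemma corner_mem (Q : Cube n) : Q.corner ∈ Q.toSet :=
  fun _ => ⟨le_rfl, lt_add_of_pos_right _ Q.side_pos⟩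

lemma dist_le_side (hx : x ∈ Q.toSet) (hy : y ∈ Q.toSet) : dist x y ≤ Q.side := by
  refine (dist_pi_le_iff Q.side_pos.le).2 fun i => ?_
  rw [Real.dist_eq, abs_le]
  constructor <;> linarith [hx i, hy i]

lemma mem_dilate_of_dist_le (ht : 0 < t) (hx : x ∈ Q.toSet)
    (h : dist y x ≤ (t - 1) / 2 * Q.side) : y ∈ (Q.dilate t ht).toSet := by
  intro i
  have hi := abs_le.1 ((dist_le_pi_dist y x i).trans h)
  simp only [dilate]
  constructor <;> linarith [hx i]

lemma subset_dilate (ht : 1 ≤ t) : Q.toSet ⊆ (Q.dilate t (one_pos.trans_le ht)).toSet :=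
  fun x hx => mem_dilate_of_dist_le _ hx <| by
    rw [dist_self]; exact mul_nonneg (by linarith) Q.side_pos.le

lemma subset_dilate_of_inter_nonempty (ht : 0 < t) (h : P.side ≤ (t - 1) / 2 * Q.side)
    (hPQ : (P.toSet ∩ Q.toSet).Nonempty) : P.toSet ⊆ (Q.dilate t ht).toSet := by
  obtain ⟨x, hxP, hxQ⟩ := hPQ
  exact fun y hy => mem_dilate_of_dist_le ht hxQ ((dist_le_side hy hxP).trans h)

lemma subset_triple : Q.toSet ⊆ Q.triple.toSet := subset_dilate (by norm_num)

lemma subset_triple_of_inter_nonempty (h : P.side ≤ Q.side) (hPQ : (P.toSet ∩ Q.toSet).Nonempty) :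
    P.toSet ⊆ Q.triple.toSet :=
  subset_dilate_of_inter_nonempty _ (by linarith) hPQ

lemma subset_interior_triple : Q.toSet ⊆ interior Q.triple.toSet := fun x hx =>
  mem_interior_iff_mem_nhds.2 <| Filter.mem_of_superset (Metric.closedBall_mem_nhds x Q.side_pos)
    fun _ hy => mem_dilate_of_dist_le _ hx (le_of_le_of_eq hy (by ring))

lemma toSet_eq_pi : Q.toSet = univ.pi fun i => Ico (Q.corner i) (Q.corner i + Q.side) := by
  ext x
  simp [toSet]

lemma volume_toSet (Q : Cube n) : volume Q.toSet = ENNReal.ofReal Q.side ^ n := by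
  simp [toSet_eq_pi, volume_pi_pi]

lemma isBounded_toSet (Q : Cube n) : Bornology.IsBounded Q.toSet :=
  Metric.isBounded_iff.2 ⟨Q.side, fun _ hx _ hy => dist_le_side hx hy⟩

lemma exists_superset {s : Set (Fin n → ℝ)} (hs : Bornology.IsBounded s) :
    ∃ Q : Cube n, s ⊆ Q.toSet := by
  obtain ⟨R, hR0, hR⟩ := hs.subset_closedBall_lt 0 0
  refine ⟨⟨fun _ => -R, 3 * R, by positivity⟩, fun x hx i => ?_⟩
  have hi := abs_le.1 ((dist_le_pi_dist x 0 i).trans (hR hx))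
  simp only [Pi.zero_apply, sub_zero] at hi
  constructor <;> linarith

end Cube

section Content

variable {n : ℕ} {δ : ℝ} {E F : Set (Fin n → ℝ)}

lemma hContent_le_tsum_weight {Q : ℕ → Cube n} (h : E ⊆ ⋃ i, (Q i).toSet) :
    hContent n δ E ≤ ∑' i, (Q i).weight δ :=
  iInf₂_le Q h

lemma exists_cover_of_hContent_lt {a : ℝ≥0∞} (h : hContent n δ E < a) :
    ∃ Q : ℕ → Cube n, E ⊆ ⋃ i, (Q i).toSet ∧ ∑' i, (Q i).weight δ < a := by
  simpa only [hContent, Cube.weight, iInf_lt_iff, exists_prop] using h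

lemma hContent_mono (h : E ⊆ F) : hContent n δ E ≤ hContent n δ F :=
  le_iInf₂ fun _ hQ => hContent_le_tsum_weight (h.trans hQ)

-- The definition only allows coverings by sequences, so a countable family is padded with a
-- sequence of cubes of small total weight.
lemma hContent_iUnion_toSet_le (hδ : δ ≠ 0) {ι : Type*} [Countable ι] (Q : ι → Cube n) :
    hContent n δ (⋃ i, (Q i).toSet) ≤ ∑' i, (Q i).weight δ := by
  refine ENNReal.le_of_forall_pos_le_add fun ε hε _ => ?_
  obtain ⟨P, hP⟩ := Cube.exists_tsum_weight_lt n hδ (ENNReal.coe_pos.2 hε).ne'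
  obtain ⟨_⟩ := nonempty_denumerable (ι ⊕ ℕ)
  let e := Denumerable.eqv (ι ⊕ ℕ)
  let R := Sum.elim Q P
  calc hContent n δ (⋃ i, (Q i).toSet) ≤ ∑' k, (R (e.symm k)).weight δ :=
        hContent_le_tsum_weight <| iUnion_subset fun i =>
          subset_iUnion_of_subset (e (.inl i)) (by simp [R])
    _ = ∑' i, (Q i).weight δ + ∑' i, (P i).weight δ := by
        rw [e.symm.tsum_eq fun j => (R j).weight δ,
          ENNReal.summable.tsum_sum ENNReal.summable]
        rfl
    _ ≤ ∑' i, (Q i).weight δ + ε := by gcongr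

lemma hContent_iUnion_le (hδ : δ ≠ 0) {ι : Type*} [Countable ι] (s : ι → Set (Fin n → ℝ)) :
    hContent n δ (⋃ i, s i) ≤ ∑' i, hContent n δ (s i) := by
  refine ENNReal.le_of_forall_pos_le_add fun ε hε hfin => ?_
  obtain ⟨e, he, hsum⟩ := ENNReal.exists_pos_sum_of_countable (ENNReal.coe_pos.2 hε).ne' ι
  choose Q hQ hQw using fun i => exists_cover_of_hContent_lt <| ENNReal.lt_add_right
    (ENNReal.ne_top_of_tsum_ne_top hfin.ne i) (ENNReal.coe_pos.2 (he i)).ne'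
  calc hContent n δ (⋃ i, s i) ≤ hContent n δ (⋃ p : ι × ℕ, (Q p.1 p.2).toSet) := by
        rw [iUnion_prod']
        exact hContent_mono (iUnion_mono hQ)
    _ ≤ ∑' i, ∑' j, (Q i j).weight δ := by
        rw [← ENNReal.tsum_prod (f := fun i j => (Q i j).weight δ)]
        exact hContent_iUnion_toSet_le hδ _
    _ ≤ ∑' i, (hContent n δ (s i) + e i) := ENNReal.tsum_le_tsum fun i => (hQw i).le
    _ ≤ ∑' i, hContent n δ (s i) + ε := by
        rw [ENNReal.tsum_add]
        gcongr

lemma hContent_union_le (hδ : δ ≠ 0) (E F : Set (Fin n → ℝ)) :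
    hContent n δ (E ∪ F) ≤ hContent n δ E + hContent n δ F := by
  rw [union_eq_iUnion]
  exact (hContent_iUnion_le hδ _).trans_eq (by rw [tsum_bool, add_comm]; rfl)

lemma hContent_empty (hδ : δ ≠ 0) : hContent n δ ∅ = 0 := by
  simpa using hContent_iUnion_toSet_le (n := n) hδ (Empty.elim : Empty → Cube n)

lemma hContent_toSet_le_weight (hδ : δ ≠ 0) (Q : Cube n) : hContent n δ Q.toSet ≤ Q.weight δ := by
  simpa [iUnion_const] using hContent_iUnion_toSet_le hδ fun _ : Unit => Q

-- If no covering cube is as large as `Q`, then `ℓⁿ ≤ ℓ(Q)ⁿ⁻ᵟ ℓᵟ` for each of them, and the bound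
-- follows by comparing volumes.
lemma weight_le_hContent (hδ : 0 ≤ δ) (hδn : δ ≤ n) (Q : Cube n) :
    Q.weight δ ≤ hContent n δ Q.toSet := by
  refine le_iInf₂ fun P hP => ?_
  change Q.weight δ ≤ ∑' i, (P i).weight δ
  by_cases! hlarge : ∃ i, Q.side ≤ (P i).side
  · obtain ⟨i, hi⟩ := hlarge
    exact (Cube.weight_le_weight hδ hi).trans (ENNReal.le_tsum i)
  have hvol (R : Cube n) : R.weight n = volume R.toSet := by
    rw [R.volume_toSet, ← ENNReal.ofReal_pow R.side_pos.le, Cube.weight, Real.rpow_natCast]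
  have hle : ENNReal.ofReal (Q.side ^ (n - δ)) * Q.weight δ ≤
      ENNReal.ofReal (Q.side ^ (n - δ)) * ∑' i, (P i).weight δ := calc
    _ = volume Q.toSet := by rw [← Cube.weight_natCast, hvol]
    _ ≤ ∑' i, volume (P i).toSet := (measure_mono hP).trans (measure_iUnion_le _)
    _ = ∑' i, ENNReal.ofReal ((P i).side ^ (n - δ)) * (P i).weight δ := by
        simp only [← hvol, ← Cube.weight_natCast]
    _ ≤ ∑' i, ENNReal.ofReal (Q.side ^ (n - δ)) * (P i).weight δ := by
        gcongr with i
        exacts [(P i).side_pos.le, (hlarge i).le]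
    _ = _ := ENNReal.tsum_mul_left
  exact (ENNReal.mul_le_mul_iff_right (Cube.weight_ne_zero (δ := n - δ))
    (Cube.weight_ne_top (δ := n - δ))).1 hle

lemma hContent_toSet (hδ : 0 < δ) (hδn : δ ≤ n) (Q : Cube n) : hContent n δ Q.toSet = Q.weight δ :=
  (hContent_toSet_le_weight hδ.ne' Q).antisymm (weight_le_hContent hδ.le hδn Q)

lemma exists_isOpen_superset_hContent_lt (hδ : δ ≠ 0) {ε : ℝ≥0∞}
    (h : ENNReal.ofReal (3 ^ δ) * hContent n δ E < ε) :
    ∃ O, IsOpen O ∧ E ⊆ O ∧ hContent n δ O < ε := by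
  have h3 : ENNReal.ofReal (3 ^ δ) ≠ 0 := (ENNReal.ofReal_pos.2 (by positivity)).ne'
  obtain ⟨Q, hQ, hQw⟩ := exists_cover_of_hContent_lt
    ((ENNReal.lt_div_iff_mul_lt (.inl h3) (.inl ENNReal.ofReal_ne_top)).2 (by rwa [mul_comm]))
  refine ⟨⋃ i, interior (Q i).triple.toSet, isOpen_iUnion fun i => isOpen_interior,
    hQ.trans (iUnion_mono fun i => Cube.subset_interior_triple), ?_⟩
  calc hContent n δ (⋃ i, interior (Q i).triple.toSet)
      ≤ ∑' i, (Q i).triple.weight δ :=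
        (hContent_mono (iUnion_mono fun i => interior_subset)).trans
          (hContent_iUnion_toSet_le hδ _)
    _ = ENNReal.ofReal (3 ^ δ) * ∑' i, (Q i).weight δ := by
        simp only [Cube.weight_dilate, ENNReal.tsum_mul_left]
    _ < ε := by
        rw [mul_comm]
        exact (ENNReal.lt_div_iff_mul_lt (.inl h3) (.inl ENNReal.ofReal_ne_top)).1 hQw

end Content

section Antitone

variable {F : ℝ → ℝ≥0∞}

lemma lintegral_Icc_le_of_antitone (hF : Antitone F) (a b : ℝ) :
    ∫⁻ t in Icc a b, F t ≤ ENNReal.ofReal (b - a) * F a := calc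
  ∫⁻ t in Icc a b, F t ≤ ∫⁻ _ in Icc a b, F a :=
    setLIntegral_mono measurable_const fun _ ht => hF ht.1
  _ = _ := by rw [setLIntegral_const, Real.volume_Icc, mul_comm]

lemma le_lintegral_Ioc_of_antitone (hF : Antitone F) (a b : ℝ) :
    ENNReal.ofReal (b - a) * F b ≤ ∫⁻ t in Ioc a b, F t := calc
  _ = ∫⁻ _ in Ioc a b, F b := by rw [setLIntegral_const, Real.volume_Ioc, mul_comm]
  _ ≤ _ := setLIntegral_mono hF.measurable fun _ ht => hF ht.2

lemma lintegral_Ioi_le_tsum_of_antitone (hF : Antitone F) {s : ℝ} (hs : 0 < s) :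
    ∫⁻ t in Ioi (0 : ℝ), F t ≤
      ENNReal.ofReal s * F 0 + ∑' k : ℕ, ENNReal.ofReal (s * 2 ^ k) * F (s * 2 ^ k) := by
  have hcover : Ioi (0 : ℝ) ⊆ Icc 0 s ∪ ⋃ k : ℕ, Icc (s * 2 ^ k) (s * 2 ^ (k + 1)) := by
    intro t ht
    rcases le_total t s with hts | hts
    · exact .inl ⟨ht.le, hts⟩
    · obtain ⟨k, hk⟩ := exists_nat_pow_near ((one_le_div₀ hs).2 hts) one_lt_two
      rw [le_div_iff₀' hs, div_lt_iff₀' hs] at hk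
      exact .inr (mem_iUnion.2 ⟨k, hk.1, hk.2.le⟩)
  calc ∫⁻ t in Ioi (0 : ℝ), F t
      ≤ (∫⁻ t in Icc 0 s, F t) + ∑' k : ℕ, ∫⁻ t in Icc (s * 2 ^ k) (s * 2 ^ (k + 1)), F t :=
        (lintegral_mono_set hcover).trans <| (lintegral_union_le _ _ _).trans <|
          add_le_add le_rfl (lintegral_iUnion_le _ _)
    _ ≤ ENNReal.ofReal (s - 0) * F 0 +
          ∑' k : ℕ, ENNReal.ofReal (s * 2 ^ (k + 1) - s * 2 ^ k) * F (s * 2 ^ k) :=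
        add_le_add (lintegral_Icc_le_of_antitone hF _ _) <|
          ENNReal.tsum_le_tsum fun _ => lintegral_Icc_le_of_antitone hF _ _
    _ = _ := by
        congr! 5 <;> ring

lemma tsum_le_two_mul_lintegral_Ioi_of_antitone (hF : Antitone F) {s : ℝ} (hs : 0 < s) :
    ∑' k : ℕ, ENNReal.ofReal (s * 2 ^ k) * F (s * 2 ^ k) ≤ 2 * ∫⁻ t in Ioi (0 : ℝ), F t := by
  let f (k : ℕ) : ℝ := s / 2 * 2 ^ k
  have hf (k : ℕ) : f (k + 1) = s * 2 ^ k := by simp only [f]; ring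
  have hmono : Monotone f := fun i j hij => by
    simp only [f]
    gcongr
    exact one_le_two
  calc ∑' k : ℕ, ENNReal.ofReal (s * 2 ^ k) * F (s * 2 ^ k)
      = 2 * ∑' k, ENNReal.ofReal (f (k + 1) - f k) * F (f (k + 1)) := by
        rw [← ENNReal.tsum_mul_left]
        refine tsum_congr fun k => ?_
        rw [← mul_assoc, ← ENNReal.ofReal_ofNat, ← ENNReal.ofReal_mul zero_le_two, hf]
        congr 2
        simp only [f]
        ring
    _ ≤ 2 * ∑' k, ∫⁻ t in Ioc (f k) (f (k + 1)), F t := by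
        gcongr
        exact le_lintegral_Ioc_of_antitone hF _ _
    _ = 2 * ∫⁻ t in ⋃ k, Ioc (f k) (f (k + 1)), F t :=
        congrArg (2 * ·) <| Eq.symm <|
          lintegral_iUnion (fun _ => measurableSet_Ioc) hmono.pairwise_disjoint_on_Ioc_succ F
    _ ≤ 2 * ∫⁻ t in Ioi (0 : ℝ), F t := by
        gcongr
        exact iUnion_subset fun k t ht => lt_trans (by positivity) ht.1

end Antitone

lemma lintegral_Ioi_comp_mul_left {F : ℝ → ℝ≥0∞} (hF : Measurable F) {a : ℝ} (ha : 0 < a) :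
    ∫⁻ t in Ioi (0 : ℝ), F (a * t) = ENNReal.ofReal a⁻¹ * ∫⁻ t in Ioi (0 : ℝ), F t := by
  have hpre : (a * ·) ⁻¹' Ioi (0 : ℝ) = Ioi 0 := by ext t; simp [ha]
  have hmap := setLIntegral_map (μ := volume) (measurableSet_Ioi (a := 0)) hF
    (measurable_const_mul a)
  rw [Real.map_volume_mul_left ha.ne', hpre, abs_of_pos (inv_pos.2 ha)] at hmap
  rw [← hmap, Measure.restrict_smul, lintegral_smul_measure, smul_eq_mul]

lemma lintegral_Ioi_exp_neg (c : ℝ) :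
    ∫⁻ t in Ioi c, ENNReal.ofReal (Real.exp (-t)) = ENNReal.ofReal (Real.exp (-c)) := by
  rw [← ofReal_integral_eq_lintegral_ofReal (integrableOn_exp_neg_Ioi c)
    (.of_forall fun t => (Real.exp_pos _).le), integral_exp_neg_Ioi]

section Choquet

variable {n : ℕ} {δ c : ℝ} {u v w : (Fin n → ℝ) → ℝ} {A B : Set (Fin n → ℝ)}

/-- The distribution function `t ↦ ℋ^δ_∞({x ∈ A : u x > t})`, whose integral over `(0, ∞)` is the
Choquet integral of `u`. -/
def distribH (n : ℕ) (δ : ℝ) (u : (Fin n → ℝ) → ℝ) (A : Set (Fin n → ℝ)) (t : ℝ) : ℝ≥0∞ :=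
  hContent n δ {x | x ∈ A ∧ t < u x}

lemma antitone_distribH : Antitone (distribH n δ u A) :=
  fun _ _ h => hContent_mono fun _ hx => ⟨hx.1, h.trans_lt hx.2⟩

lemma distribH_le_hContent (t : ℝ) : distribH n δ u A t ≤ hContent n δ A :=
  hContent_mono fun _ hx => hx.1

lemma integH_mono (hAB : A ⊆ B) (h : ∀ x ∈ A, u x ≤ v x) : integH n δ u A ≤ integH n δ v B :=
  lintegral_mono fun _ => hContent_mono fun _ hx => ⟨hAB hx.1, hx.2.trans_le (h _ hx.1)⟩

lemma integH_mono_set (hAB : A ⊆ B) : integH n δ u A ≤ integH n δ u B :=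
  integH_mono hAB fun _ _ => le_rfl

lemma integH_mono_fun (h : ∀ x ∈ A, u x ≤ v x) : integH n δ u A ≤ integH n δ v A :=
  integH_mono Subset.rfl h

lemma integH_eq_zero (h : hContent n δ {x | x ∈ A ∧ 0 < u x} = 0) : integH n δ u A = 0 :=
  nonpos_iff_eq_zero.1 <| calc
    integH n δ u A ≤ ∫⁻ _ in Ioi (0 : ℝ), 0 :=
      setLIntegral_mono' measurableSet_Ioi fun _ ht => (antitone_distribH ht.le).trans_eq h
    _ = 0 := lintegral_zero

lemma integH_const_mul (hδ : δ ≠ 0) {a : ℝ} (ha : 0 ≤ a) :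
    integH n δ (fun x => a * u x) A = ENNReal.ofReal a * integH n δ u A := by
  rcases ha.eq_or_lt with rfl | ha
  · rw [ENNReal.ofReal_zero, zero_mul]
    exact integH_eq_zero (by simp [hContent_empty hδ])
  · have hscale := lintegral_Ioi_comp_mul_left (F := distribH n δ u A)
      antitone_distribH.measurable (inv_pos.2 ha)
    rw [inv_inv] at hscale
    simp only [distribH, inv_mul_lt_iff₀ ha] at hscale
    exact hscale

lemma integH_le_of_le_add (hδ : δ ≠ 0) {θ : ℝ} (hθ₀ : 0 < θ) (hθ₁ : θ < 1)
    (h : ∀ x ∈ A, u x ≤ v x + w x) :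
    integH n δ u A ≤
      ENNReal.ofReal θ⁻¹ * integH n δ v A + ENNReal.ofReal (1 - θ)⁻¹ * integH n δ w A := by
  have hdistrib (t : ℝ) :
      distribH n δ u A t ≤ distribH n δ v A (θ * t) + distribH n δ w A ((1 - θ) * t) := by
    refine (hContent_mono fun x hx => ?_).trans (hContent_union_le hδ _ _)
    rcases lt_or_ge (θ * t) (v x) with hv | hv
    · exact .inl ⟨hx.1, hv⟩
    · exact .inr ⟨hx.1, by linarith [h x hx.1, hx.2]⟩
  calc integH n δ u A
      ≤ ∫⁻ t in Ioi (0 : ℝ), (distribH n δ v A (θ * t) + distribH n δ w A ((1 - θ) * t)) :=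
        lintegral_mono hdistrib
    _ = _ := by
        have hmeas := (antitone_distribH (δ := δ) (u := v) (A := A)).measurable
        rw [lintegral_add_left (f := fun t => distribH n δ v A (θ * t))
            (hmeas.comp (measurable_const_mul θ)),
          lintegral_Ioi_comp_mul_left hmeas hθ₀,
          lintegral_Ioi_comp_mul_left antitone_distribH.measurable (sub_pos.2 hθ₁)]
        rfl

lemma integH_add_le (hδ : δ ≠ 0) :
    integH n δ (fun x => v x + w x) A ≤ 2 * integH n δ v A + 2 * integH n δ w A := by
  have h := integH_le_of_le_add (n := n) (A := A) (v := v) (w := w) hδ one_half_pos one_half_lt_one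
    fun _ _ => le_rfl
  norm_num at h
  exact h

lemma integH_sub_const (c : ℝ) :
    integH n δ (fun x => u x - c) A = ∫⁻ t in Ioi c, distribH n δ u A t := by
  have hpre : (· + c) ⁻¹' Ioi c = Ioi 0 := by ext t; simp
  rw [← (measurePreserving_add_right volume c).setLIntegral_comp_preimage measurableSet_Ioi
    antitone_distribH.measurable, hpre]
  simp only [distribH, ← lt_sub_iff_add_lt]
  rfl

lemma integH_le_add_integH_sub (c : ℝ) :
    integH n δ u A ≤ ENNReal.ofReal c * hContent n δ A + integH n δ (fun x => u x - c) A := by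
  rw [integH_sub_const]
  calc integH n δ u A
      ≤ (∫⁻ t in Ioc 0 c, distribH n δ u A t) + ∫⁻ t in Ioi c, distribH n δ u A t :=
        (lintegral_mono_set Ioi_subset_Ioc_union_Ioi).trans (lintegral_union_le _ _ _)
    _ ≤ ENNReal.ofReal (c - 0) * distribH n δ u A 0 + ∫⁻ t in Ioi c, distribH n δ u A t :=
        add_le_add ((lintegral_mono_set Ioc_subset_Icc_self).trans
          (lintegral_Icc_le_of_antitone antitone_distribH 0 c)) le_rfl
    _ ≤ _ := by
        rw [sub_zero]
        gcongr
        exact distribH_le_hContent 0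

lemma integH_le_of_le_const_add (h : ∀ x ∈ A, u x ≤ c + v x) :
    integH n δ u A ≤ ENNReal.ofReal c * hContent n δ A + integH n δ v A :=
  (integH_le_add_integH_sub c).trans <| by
    gcongr
    exact integH_mono_fun fun x hx => sub_le_iff_le_add'.2 (h x hx)

lemma integH_le_of_ae_le (h : hContent n δ {x | x ∈ A ∧ c < u x} = 0) :
    integH n δ u A ≤ ENNReal.ofReal c * hContent n δ A := by
  refine (integH_le_add_integH_sub c).trans_eq ?_
  rw [integH_eq_zero (by simpa only [sub_pos] using h), add_zero]

lemma ofReal_mul_hContent_le_integH (h : ∀ x ∈ A, c ≤ u x) :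
    ENNReal.ofReal c * hContent n δ A ≤ integH n δ u A := calc
  _ = ∫⁻ _ in Ioo 0 c, hContent n δ A := by
    rw [setLIntegral_const, Real.volume_Ioo, sub_zero, mul_comm]
  _ ≤ ∫⁻ t in Ioo 0 c, distribH n δ u A t :=
    setLIntegral_mono' measurableSet_Ioo fun _ ht =>
      hContent_mono fun x hx => ⟨hx, ht.2.trans_le (h x hx)⟩
  _ ≤ _ := lintegral_mono_set fun _ ht => ht.1

lemma integH_le_of_exp_tail {K : ℝ≥0∞} (hK : K ≠ ⊤)
    (h : ∀ t, c < t → distribH n δ u A t ≤ K * ENNReal.ofReal (Real.exp (-t))) :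
    integH n δ u A ≤ ENNReal.ofReal c * hContent n δ A + K * ENNReal.ofReal (Real.exp (-c)) :=
  (integH_le_add_integH_sub c).trans <| by
    rw [integH_sub_const, ← lintegral_Ioi_exp_neg, ← lintegral_const_mul' _ _ hK]
    exact add_le_add le_rfl (setLIntegral_mono' measurableSet_Ioi h)

open Filter Topology in
lemma exists_integH_sub_const_lt (h : integH n δ u A ≠ ⊤) {ε : ℝ≥0∞} (hε : ε ≠ 0) :
    ∃ T > 0, integH n δ (fun x => u x - T) A < ε := by
  let ν := volume.withDensity (distribH n δ u A)
  have hν (T : ℝ) : ν (Ioi T) = integH n δ (fun x => u x - T) A := by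
    rw [integH_sub_const, withDensity_apply _ measurableSet_Ioi]
  have htend := tendsto_measure_iInter_atTop (μ := ν) (s := fun T : ℝ => Ioi T)
    (fun _ => measurableSet_Ioi.nullMeasurableSet) (fun _ _ hab => Ioi_subset_Ioi hab)
    ⟨0, by simpa only [hν, sub_zero] using h⟩
  rw [iInter_eq_empty_iff.2 fun T : ℝ => ⟨T, self_notMem_Ioi⟩, measure_empty] at htend
  obtain ⟨T, hTε, hT⟩ :=
    ((htend.eventually_lt_const hε.bot_lt).and (eventually_gt_atTop 0)).exists
  exact ⟨T, hT, (hν T).symm.trans_lt hTε⟩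

end Choquet

lemma Cube.exists_disjoint_triple_cover {n : ℕ} {𝒬 : Set (Cube n)} {R : ℝ}
    (hR : ∀ Q ∈ 𝒬, Q.side ≤ R) :
    ∃ 𝒰 ⊆ 𝒬, 𝒰.Countable ∧ 𝒰.PairwiseDisjoint (fun Q => Q.triple.toSet) ∧
      ⋃ Q ∈ 𝒬, Q.toSet ⊆ ⋃ Q ∈ 𝒰, (Q.triple.dilate 5 (by norm_num)).toSet := by
  obtain ⟨𝒰, h𝒰, hdisj, hcover⟩ := Vitali.exists_disjoint_subfamily_covering_enlargement
    (fun Q : Cube n => Q.triple.toSet) 𝒬 side 2 one_lt_two (fun Q _ => Q.side_pos.le) R hR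
    (fun Q _ => ⟨_, Q.triple.corner_mem⟩)
  refine ⟨𝒰, h𝒰, hdisj.countable_of_nonempty_interior fun Q _ =>
    ⟨_, subset_interior_triple Q.corner_mem⟩, hdisj, iUnion₂_subset fun P hP => ?_⟩
  obtain ⟨Q, hQ, hPQ, hside⟩ := hcover P hP
  have hside3 : P.triple.side ≤ (5 - 1) / 2 * Q.triple.side := by
    simp only [triple, dilate]
    linarith
  exact (subset_triple.trans (subset_dilate_of_inter_nonempty _ hside3 hPQ)).trans
    (subset_biUnion_of_mem (u := fun Q : Cube n => (Q.triple.dilate 5 _).toSet) hQ)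

section WeakType

variable {n : ℕ} {δ s t : ℝ} {u : (Fin n → ℝ) → ℝ} {A : Set (Fin n → ℝ)} {P : ℕ × ℕ → Cube n}
  {Q : Cube n}

/-- The union of the cubes in `A` over which the average of `u` exceeds `t`, a localized superlevel
set of the maximal function. Averages are taken with `ℓ(Q)^δ` in place of the content of `Q`. -/
def largeAverageSet (n : ℕ) (δ : ℝ) (u : (Fin n → ℝ) → ℝ) (A : Set (Fin n → ℝ)) (t : ℝ) :
    Set (Fin n → ℝ) :=
  {x | ∃ Q : Cube n, x ∈ Q.toSet ∧ Q.toSet ⊆ A ∧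
    ENNReal.ofReal t * Q.weight δ < integH n δ u Q.toSet}

/-- For each `k`, the cubes `P (k, j)`, `j : ℕ`, cover the dyadic superlevel set
`{x ∈ A : u x > s 2ᵏ}`. Sums over such a cover are additive substitutes for the
Choquet integral. -/
def IsLayerCover (u : (Fin n → ℝ) → ℝ) (A : Set (Fin n → ℝ)) (s : ℝ) (P : ℕ × ℕ → Cube n) : Prop :=
  ∀ k, {x | x ∈ A ∧ s * 2 ^ k < u x} ⊆ ⋃ j, (P (k, j)).toSet

/-- The contribution `s 2ᵏ ℓ(P (k, j))^δ` of one cube of a layer cover to a Riemann sum for the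
Choquet integral. -/
def layerMass (δ s : ℝ) (P : ℕ × ℕ → Cube n) (p : ℕ × ℕ) : ℝ≥0∞ :=
  ENNReal.ofReal (s * 2 ^ p.1) * (P p).weight δ

lemma exists_isLayerCover (hs : 0 < s) (h0 : integH n δ u A ≠ 0) (htop : integH n δ u A ≠ ⊤) :
    ∃ P, IsLayerCover u A s P ∧ ∑' p, layerMass δ s P p ≤ 3 * integH n δ u A := by
  obtain ⟨e, he, hsum⟩ := ENNReal.exists_pos_sum_of_countable h0 ℕ
  let c (k : ℕ) : ℝ≥0∞ := ENNReal.ofReal (s * 2 ^ k)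
  have hc0 (k) : c k ≠ 0 := (ENNReal.ofReal_pos.2 (by positivity)).ne'
  have hctop (k) : c k ≠ ⊤ := ENNReal.ofReal_ne_top
  let D (k : ℕ) : ℝ≥0∞ := distribH n δ u A (s * 2 ^ k)
  have hlayers : ∑' k, c k * D k ≤ 2 * integH n δ u A :=
    tsum_le_two_mul_lintegral_Ioi_of_antitone antitone_distribH hs
  have hDtop (k) : D k ≠ ⊤ := fun hk => ENNReal.ne_top_of_tsum_ne_top
    (ne_top_of_le_ne_top (ENNReal.mul_ne_top ENNReal.ofNat_ne_top htop) hlayers) k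
    (by rw [hk, ENNReal.mul_top (hc0 k)])
  choose P hP hPw using fun k => exists_cover_of_hContent_lt <| ENNReal.lt_add_right (hDtop k)
    (ENNReal.div_pos (ENNReal.coe_pos.2 (he k)).ne' (hctop k)).ne'
  refine ⟨fun p => P p.1 p.2, hP, ?_⟩
  calc ∑' p, layerMass δ s (fun p => P p.1 p.2) p
      = ∑' k, c k * ∑' j, (P k j).weight δ := by
        simp only [ENNReal.tsum_prod', layerMass, ENNReal.tsum_mul_left, c]
    _ ≤ ∑' k, c k * (D k + e k / c k) := by
        gcongr with k
        exact (hPw k).le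
    _ = ∑' k, c k * D k + ∑' k, (e k : ℝ≥0∞) := by
        simp only [mul_add, ENNReal.mul_div_cancel (hc0 _) (hctop _), ENNReal.tsum_add]
    _ ≤ 2 * integH n δ u A + integH n δ u A := add_le_add hlayers hsum.le
    _ = 3 * integH n δ u A := by ring

lemma integH_toSet_le_add_tsum_layerMass (hδ : δ ≠ 0) (hs : 0 < s) (hP : IsLayerCover u A s P)
    (hQA : Q.toSet ⊆ A)
    (hdom : ∀ p, ((P p).toSet ∩ Q.toSet).Nonempty → (P p).side ≤ Q.side) :
    integH n δ u Q.toSet ≤ ENNReal.ofReal s * Q.weight δ +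
      ∑' p : {p | (P p).toSet ⊆ Q.triple.toSet}, layerMass δ s P p := by
  let T := {p | (P p).toSet ⊆ Q.triple.toSet}
  have hlayer (k : ℕ) : distribH n δ u Q.toSet (s * 2 ^ k) ≤
      ∑' j, indicator T (fun p => (P p).weight δ) (k, j) := by
    have hcover : {x | x ∈ Q.toSet ∧ s * 2 ^ k < u x} ⊆
        ⋃ j : {j | (k, j) ∈ T}, (P (k, j)).toSet := by
      rintro x ⟨hxQ, hx⟩
      obtain ⟨j, hj⟩ := mem_iUnion.1 (hP k ⟨hQA hxQ, hx⟩)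
      have hPQ : ((P (k, j)).toSet ∩ Q.toSet).Nonempty := ⟨x, hj, hxQ⟩
      exact mem_iUnion.2 ⟨⟨j, Cube.subset_triple_of_inter_nonempty (hdom _ hPQ) hPQ⟩, hj⟩
    refine (hContent_mono hcover).trans ((hContent_iUnion_toSet_le hδ _).trans_eq ?_)
    exact tsum_subtype {j | (k, j) ∈ T} fun j => (P (k, j)).weight δ
  calc integH n δ u Q.toSet
      ≤ ENNReal.ofReal s * distribH n δ u Q.toSet 0 +
          ∑' k : ℕ, ENNReal.ofReal (s * 2 ^ k) * distribH n δ u Q.toSet (s * 2 ^ k) :=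
        lintegral_Ioi_le_tsum_of_antitone antitone_distribH hs
    _ ≤ ENNReal.ofReal s * Q.weight δ + ∑' k : ℕ, ENNReal.ofReal (s * 2 ^ k) *
          ∑' j, indicator T (fun p => (P p).weight δ) (k, j) := by
        gcongr with k
        · exact (distribH_le_hContent 0).trans (hContent_toSet_le_weight hδ Q)
        · exact hlayer k
    _ = ENNReal.ofReal s * Q.weight δ + ∑' p : T, layerMass δ s P p := by
        rw [tsum_subtype T (layerMass δ s P), ENNReal.tsum_prod']
        simp only [← ENNReal.tsum_mul_left]
        refine congrArg _ (tsum_congr fun k => tsum_congr fun j => ?_)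
        by_cases hkj : (k, j) ∈ T <;> simp [hkj, layerMass]

lemma mul_weight_le_two_mul_tsum_layerMass (hδ : δ ≠ 0) (ht : 0 < t)
    (hP : IsLayerCover u A (t / 2) P) (hQA : Q.toSet ⊆ A)
    (hQ : ENNReal.ofReal t * Q.weight δ < integH n δ u Q.toSet)
    (hdom : ∀ p, ((P p).toSet ∩ Q.toSet).Nonempty → (P p).side ≤ Q.side) :
    ENNReal.ofReal t * Q.weight δ ≤
      2 * ∑' p : {p | (P p).toSet ⊆ Q.triple.toSet}, layerMass δ (t / 2) P p := by
  have hhalf : ENNReal.ofReal t * Q.weight δ =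
      ENNReal.ofReal (t / 2) * Q.weight δ + ENNReal.ofReal (t / 2) * Q.weight δ := by
    rw [← add_mul, ← ENNReal.ofReal_add (by positivity) (by positivity), add_halves]
  have hle := hQ.le.trans (integH_toSet_le_add_tsum_layerMass hδ (half_pos ht) hP hQA hdom)
  rw [hhalf] at hle ⊢
  rw [← two_mul]
  gcongr
  exact ENNReal.le_of_add_le_add_left
    (ENNReal.mul_ne_top ENNReal.ofReal_ne_top Cube.weight_ne_top) hle

lemma Cube.side_le_of_mul_weight_le_integH (hδ : 0 < δ) (ht : 0 < t) (htop : integH n δ u A ≠ ⊤)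
    (hQA : Q.toSet ⊆ A) (hQ : ENNReal.ofReal t * Q.weight δ ≤ integH n δ u Q.toSet) :
    Q.side ≤ ((integH n δ u A).toReal / t) ^ δ⁻¹ := by
  have hle := hQ.trans (integH_mono_set hQA)
  rw [weight, ← ENNReal.ofReal_mul ht.le, ENNReal.ofReal_le_iff_le_toReal htop] at hle
  rwa [Real.le_rpow_inv_iff_of_pos Q.side_pos.le (by positivity) hδ, le_div_iff₀' ht]

-- Only the triples are required to be disjoint: the part of the layer cover charged to a cube lies
-- in its triple.
lemma tsum_mul_weight_le_two_mul_tsum_layerMass (hδ : δ ≠ 0) (ht : 0 < t)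
    (hP : IsLayerCover u A (t / 2) P) {𝒰 : Set (Cube n)}
    (hdisj : 𝒰.PairwiseDisjoint fun Q => Q.triple.toSet)
    (h𝒰 : ∀ Q ∈ 𝒰, Q.toSet ⊆ A ∧ ENNReal.ofReal t * Q.weight δ < integH n δ u Q.toSet)
    (hdom : ∀ Q ∈ 𝒰, ∀ p, ((P p).toSet ∩ Q.toSet).Nonempty → (P p).side ≤ Q.side) :
    ∑' Q : 𝒰, ENNReal.ofReal t * Q.1.weight δ ≤ 2 * ∑' p, layerMass δ (t / 2) P p := by
  let S (Q : Cube n) : Set (ℕ × ℕ) := {p | (P p).toSet ⊆ Q.triple.toSet}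
  have hSdisj : 𝒰.PairwiseDisjoint S := fun Q hQ Q' hQ' hne =>
    disjoint_left.2 fun p hp hp' => disjoint_left.1 (hdisj hQ hQ' hne)
      (hp (P p).corner_mem) (hp' (P p).corner_mem)
  calc ∑' Q : 𝒰, ENNReal.ofReal t * Q.1.weight δ
      ≤ ∑' Q : 𝒰, 2 * ∑' p : S Q, layerMass δ (t / 2) P p :=
        ENNReal.tsum_le_tsum fun Q => mul_weight_le_two_mul_tsum_layerMass hδ ht hP
          (h𝒰 Q Q.2).1 (h𝒰 Q Q.2).2 (hdom Q Q.2)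
    _ = 2 * ∑' p : ⋃ Q ∈ 𝒰, S Q, layerMass δ (t / 2) P p := by
        rw [ENNReal.tsum_mul_left, ENNReal.tsum_biUnion' hSdisj]
    _ ≤ 2 * ∑' p, layerMass δ (t / 2) P p :=
        mul_le_mul_right (ENNReal.tsum_comp_le_tsum_of_injective Subtype.val_injective _) _

lemma mul_hContent_biUnion_dominating_le (hδ : 0 < δ) (ht : 0 < t) (htop : integH n δ u A ≠ ⊤)
    (hP : IsLayerCover u A (t / 2) P) {𝒬 : Set (Cube n)}
    (h𝒬 : ∀ Q ∈ 𝒬, Q.toSet ⊆ A ∧ ENNReal.ofReal t * Q.weight δ < integH n δ u Q.toSet)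
    (hdom : ∀ Q ∈ 𝒬, ∀ p, ((P p).toSet ∩ Q.toSet).Nonempty → (P p).side ≤ Q.side) :
    ENNReal.ofReal t * hContent n δ (⋃ Q ∈ 𝒬, Q.toSet) ≤
      ENNReal.ofReal (5 ^ δ) * (ENNReal.ofReal (3 ^ δ) *
        (2 * ∑' p, layerMass δ (t / 2) P p)) := by
  obtain ⟨𝒰, h𝒰, hcount, hdisj, hcover⟩ := Cube.exists_disjoint_triple_cover fun Q hQ =>
    Cube.side_le_of_mul_weight_le_integH hδ ht htop (h𝒬 Q hQ).1 (h𝒬 Q hQ).2.le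
  rw [biUnion_eq_iUnion 𝒰] at hcover
  have : Countable 𝒰 := hcount
  calc ENNReal.ofReal t * hContent n δ (⋃ Q ∈ 𝒬, Q.toSet)
      ≤ ENNReal.ofReal t * ∑' Q : 𝒰, (Q.1.triple.dilate 5 (by norm_num)).weight δ :=
        mul_le_mul_right ((hContent_mono hcover).trans (hContent_iUnion_toSet_le hδ.ne' _)) _
    _ = ENNReal.ofReal (5 ^ δ) * (ENNReal.ofReal (3 ^ δ) *
          ∑' Q : 𝒰, ENNReal.ofReal t * Q.1.weight δ) := by
        simp only [Cube.weight_dilate, ENNReal.tsum_mul_left]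
        ring
    _ ≤ _ := mul_le_mul_right (mul_le_mul_right (tsum_mul_weight_le_two_mul_tsum_layerMass hδ.ne'
        ht hP hdisj (fun Q hQ => h𝒬 Q (h𝒰 hQ)) fun Q hQ => hdom Q (h𝒰 hQ)) _) _

lemma mul_hContent_iUnion_triple_le (hδ : δ ≠ 0) (hs : 0 < s) :
    ENNReal.ofReal s * hContent n δ (⋃ p, (P p).triple.toSet) ≤
      ENNReal.ofReal (3 ^ δ) * ∑' p, layerMass δ s P p := calc
  _ ≤ ENNReal.ofReal s * ∑' p, (P p).triple.weight δ := by
    gcongr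
    exact hContent_iUnion_toSet_le hδ _
  _ = ENNReal.ofReal (3 ^ δ) * ∑' p, ENNReal.ofReal s * (P p).weight δ := by
    simp only [Cube.weight_dilate, ENNReal.tsum_mul_left]
    ring
  _ ≤ _ := by
    gcongr with p
    exact mul_le_mul_left
      (ENNReal.ofReal_le_ofReal (le_mul_of_one_le_right hs.le (one_le_pow₀ one_le_two))) _

/-- The constant in the weak type estimate for the maximal operator of `ℋ^δ_∞`. -/
def weakTypeConst (δ : ℝ) : ℝ≥0∞ :=
  6 * ENNReal.ofReal (3 ^ δ) * (1 + ENNReal.ofReal (5 ^ δ))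

lemma weakTypeConst_ne_zero : weakTypeConst δ ≠ 0 := by
  have h3 : ENNReal.ofReal (3 ^ δ) ≠ 0 := (ENNReal.ofReal_pos.2 (by positivity)).ne'
  simp [weakTypeConst, h3]

lemma weakTypeConst_ne_top : weakTypeConst δ ≠ ⊤ := by
  unfold weakTypeConst
  finiteness

-- A cube with large average either lies in the triple of some cube of the layer cover, or is at
-- least as large as every cube of the layer cover it meets.
theorem mul_hContent_largeAverageSet_le (hδ : 0 < δ) (ht : 0 < t) :
    ENNReal.ofReal t * hContent n δ (largeAverageSet n δ u A t) ≤
      weakTypeConst δ * integH n δ u A := by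
  by_cases htop : integH n δ u A = ⊤
  · simp [htop, ENNReal.mul_top weakTypeConst_ne_zero]
  by_cases h0 : integH n δ u A = 0
  · have hempty : largeAverageSet n δ u A t = ∅ := eq_empty_of_forall_notMem
      fun x ⟨Q, _, hQA, hQ⟩ => not_lt_zero (hQ.trans_le ((integH_mono_set hQA).trans_eq h0))
    simp [hempty, hContent_empty hδ.ne']
  obtain ⟨P, hP, hmass⟩ := exists_isLayerCover (half_pos ht) h0 htop
  let 𝒬 := {Q : Cube n | Q.toSet ⊆ A ∧ ENNReal.ofReal t * Q.weight δ < integH n δ u Q.toSet}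
  let 𝒢 := {Q ∈ 𝒬 | ∀ p, ((P p).toSet ∩ Q.toSet).Nonempty → (P p).side ≤ Q.side}
  have hcover : largeAverageSet n δ u A t ⊆
      (⋃ p, (P p).triple.toSet) ∪ ⋃ Q ∈ 𝒢, Q.toSet := by
    rintro x ⟨Q, hxQ, hQA, hQ⟩
    by_cases! hdom : ∀ p, ((P p).toSet ∩ Q.toSet).Nonempty → (P p).side ≤ Q.side
    · exact .inr (mem_biUnion (show Q ∈ 𝒢 from ⟨⟨hQA, hQ⟩, hdom⟩) hxQ)
    · obtain ⟨p, hPQ, hside⟩ := hdom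
      rw [inter_comm] at hPQ
      exact .inl (mem_iUnion.2 ⟨p, Cube.subset_triple_of_inter_nonempty hside.le hPQ hxQ⟩)
  have htwo : ENNReal.ofReal t = 2 * ENNReal.ofReal (t / 2) := by
    rw [← ENNReal.ofReal_ofNat, ← ENNReal.ofReal_mul zero_le_two, mul_div_cancel₀ t two_ne_zero]
  calc ENNReal.ofReal t * hContent n δ (largeAverageSet n δ u A t)
      ≤ 2 * (ENNReal.ofReal (t / 2) * hContent n δ (⋃ p, (P p).triple.toSet)) +
          ENNReal.ofReal t * hContent n δ (⋃ Q ∈ 𝒢, Q.toSet) := by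
        rw [← mul_assoc, ← htwo, ← mul_add]
        gcongr
        exact (hContent_mono hcover).trans (hContent_union_le hδ.ne' _ _)
    _ ≤ 2 * (ENNReal.ofReal (3 ^ δ) * ∑' p, layerMass δ (t / 2) P p) +
          ENNReal.ofReal (5 ^ δ) * (ENNReal.ofReal (3 ^ δ) *
            (2 * ∑' p, layerMass δ (t / 2) P p)) :=
        add_le_add (mul_le_mul_right (mul_hContent_iUnion_triple_le hδ.ne' (half_pos ht)) _)
          (mul_hContent_biUnion_dominating_le hδ ht htop hP (fun Q hQ => hQ.1) fun Q hQ => hQ.2)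
    _ ≤ 2 * (ENNReal.ofReal (3 ^ δ) * (3 * integH n δ u A)) + ENNReal.ofReal (5 ^ δ) *
          (ENNReal.ofReal (3 ^ δ) * (2 * (3 * integH n δ u A))) := by gcongr
    _ = weakTypeConst δ * integH n δ u A := by
        unfold weakTypeConst
        ring

end WeakType

section AEContent

variable {n : ℕ} {δ : ℝ} {p : (Fin n → ℝ) → Prop} {E F : Set (Fin n → ℝ)}

lemma AEContent.hContent_le (hδ : δ ≠ 0) (hp : AEContent n δ p) (h : ∀ x ∈ E, p x → x ∈ F) :
    hContent n δ E ≤ hContent n δ F := calc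
  _ ≤ hContent n δ ({x | ¬p x} ∪ F) := hContent_mono fun x hx => by
    by_cases hpx : p x
    · exact .inr (h x hx hpx)
    · exact .inl hpx
  _ ≤ hContent n δ {x | ¬p x} + hContent n δ F := hContent_union_le hδ _ _
  _ = hContent n δ F := by rw [show hContent n δ {x | ¬p x} = 0 from hp, zero_add]

lemma AEContent.exists_mem_toSet (hδ : 0 < δ) (hδn : δ ≤ n) (hp : AEContent n δ p) (Q : Cube n) :
    ∃ x ∈ Q.toSet, p x := by
  by_contra! h
  have hle : hContent n δ Q.toSet ≤ hContent n δ ∅ := hp.hContent_le hδ.ne' fun x hx hpx =>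
    (h x hx hpx).elim
  rw [hContent_empty hδ.ne', hContent_toSet hδ hδn, nonpos_iff_eq_zero] at hle
  exact Cube.weight_ne_zero hle

end AEContent

section MaximalOperator

variable {n : ℕ} {δ : ℝ} {g : (Fin n → ℝ) → ℝ} {x : Fin n → ℝ} {Q : Cube n}

lemma lt_maxOp_iff (hδ : 0 < δ) (hδn : δ ≤ n) {c : ℝ≥0∞} :
    c < maxOp n δ g x ↔
      ∃ Q : Cube n, x ∈ Q.toSet ∧ c * Q.weight δ < integH n δ (fun y => |g y|) Q.toSet := by
  simp only [maxOp, lt_iSup_iff, exists_prop, hContent_toSet hδ hδn,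
    ENNReal.lt_div_iff_mul_lt (.inl Cube.weight_ne_zero) (.inl Cube.weight_ne_top)]

lemma maxOp_le_iff (hδ : 0 < δ) (hδn : δ ≤ n) {c : ℝ≥0∞} :
    maxOp n δ g x ≤ c ↔
      ∀ Q : Cube n, x ∈ Q.toSet → integH n δ (fun y => |g y|) Q.toSet ≤ c * Q.weight δ := by
  simpa only [not_lt, not_exists, not_and] using (lt_maxOp_iff hδ hδn).not

lemma integH_le_maxOp_mul_weight (hδ : 0 < δ) (hδn : δ ≤ n) (hx : x ∈ Q.toSet) :
    integH n δ (fun y => |g y|) Q.toSet ≤ maxOp n δ g x * Q.weight δ :=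
  (maxOp_le_iff hδ hδn).1 le_rfl Q hx

lemma exists_pos_le_maxOp (hδ : 0 < δ) (hδn : δ ≤ n) (hx : maxOp n δ g x ≠ 0)
    {s : Set (Fin n → ℝ)} (hs : Bornology.IsBounded s) :
    ∃ c ≠ 0, ∀ y ∈ s, c ≤ maxOp n δ g y := by
  obtain ⟨P, -, hP⟩ := (lt_maxOp_iff hδ hδn).1 (pos_iff_ne_zero.2 hx)
  rw [zero_mul] at hP
  obtain ⟨Q, hQ⟩ := Cube.exists_superset (hs.union P.isBounded_toSet)
  refine ⟨integH n δ (fun y => |g y|) Q.toSet / Q.weight δ, ?_, fun y hy =>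
    ENNReal.div_le_of_le_mul (integH_le_maxOp_mul_weight hδ hδn (hQ (.inl hy)))⟩
  exact (ENNReal.div_pos (hP.trans_le (integH_mono_set (subset_union_right.trans hQ))).ne'
    Cube.weight_ne_top).ne'

lemma integH_le_iInf_maxOp_mul_weight (hδ : 0 < δ) (hδn : δ ≤ n) {P : Cube n}
    (hQP : Q.toSet ⊆ P.toSet) :
    integH n δ (fun y => |g y|) P.toSet ≤ (⨅ y ∈ Q.toSet, maxOp n δ g y) * P.weight δ := by
  rw [← ENNReal.div_le_iff Cube.weight_ne_zero Cube.weight_ne_top]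
  exact le_iInf₂ fun y hy =>
    ENNReal.div_le_of_le_mul (integH_le_maxOp_mul_weight hδ hδn (hQP hy))

-- Far above the level `m`, only cubes smaller than `Q` can contribute to the maximal function, so
-- the weak type estimate on `3Q` applies.
lemma mul_hContent_lt_maxOp_le (hδ : 0 < δ) (hδn : δ ≤ n) {m r : ℝ} (hm : 0 < m)
    (hr : 3 ^ δ ≤ r) (hQ : ∀ P : Cube n, Q.toSet ⊆ P.toSet →
      integH n δ (fun y => |g y|) P.toSet ≤ ENNReal.ofReal m * P.weight δ) :
    ENNReal.ofReal r * hContent n δ {x | x ∈ Q.toSet ∧ ENNReal.ofReal (m * r) < maxOp n δ g x} ≤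
      weakTypeConst δ * ENNReal.ofReal (3 ^ δ) * Q.weight δ := by
  have hr0 : 0 < r := lt_of_lt_of_le (by positivity) hr
  have hsub : {x | x ∈ Q.toSet ∧ ENNReal.ofReal (m * r) < maxOp n δ g x} ⊆
      largeAverageSet n δ (fun y => |g y|) Q.triple.toSet (m * r) := by
    rintro x ⟨hxQ, hx⟩
    obtain ⟨P, hxP, hP⟩ := (lt_maxOp_iff hδ hδn).1 hx
    refine ⟨P, hxP, ?_, hP⟩
    by_contra! hPQ
    have hside : Q.side ≤ P.side := le_of_not_ge fun h =>
      hPQ (Cube.subset_triple_of_inter_nonempty h ⟨x, hxP, hxQ⟩)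
    refine hP.not_ge ?_
    calc integH n δ (fun y => |g y|) P.toSet
        ≤ integH n δ (fun y => |g y|) P.triple.toSet := integH_mono_set Cube.subset_triple
      _ ≤ ENNReal.ofReal m * (ENNReal.ofReal (3 ^ δ) * P.weight δ) := by
          rw [← Cube.weight_dilate]
          exact hQ _ (Cube.subset_triple_of_inter_nonempty hside ⟨x, hxQ, hxP⟩)
      _ ≤ ENNReal.ofReal (m * r) * P.weight δ := by
          rw [← mul_assoc, ← ENNReal.ofReal_mul hm.le]
          gcongr
  refine (ENNReal.mul_le_mul_iff_right (ENNReal.ofReal_pos.2 hm).ne' ENNReal.ofReal_ne_top).1 ?_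
  calc _ ≤ ENNReal.ofReal (m * r) * hContent n δ
          (largeAverageSet n δ (fun y => |g y|) Q.triple.toSet (m * r)) := by
        rw [← mul_assoc, ← ENNReal.ofReal_mul hm.le]
        exact mul_le_mul_right (hContent_mono hsub) _
    _ ≤ weakTypeConst δ * integH n δ (fun y => |g y|) Q.triple.toSet :=
        mul_hContent_largeAverageSet_le hδ (mul_pos hm hr0)
    _ ≤ weakTypeConst δ * (ENNReal.ofReal m * Q.triple.weight δ) :=
        mul_le_mul_right (hQ _ Cube.subset_triple) _
    _ = _ := by
        rw [Cube.weight_dilate]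
        ring

lemma distribH_abs_log_maxOp_sub_le (hδ : 0 < δ) (hδn : δ ≤ n)
    (hM : AEContent n δ fun x => maxOp n δ g x < ⊤) {m t : ℝ} (hm : 0 < m)
    (hle : ∀ x ∈ Q.toSet, ENNReal.ofReal m ≤ maxOp n δ g x)
    (hQ : ∀ P : Cube n, Q.toSet ⊆ P.toSet →
      integH n δ (fun y => |g y|) P.toSet ≤ ENNReal.ofReal m * P.weight δ)
    (ht : δ * Real.log 3 ≤ t) :
    distribH n δ (fun x => |Real.log (maxOp n δ g x).toReal - Real.log m|) Q.toSet t ≤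
      weakTypeConst δ * ENNReal.ofReal (3 ^ δ) * Q.weight δ * ENNReal.ofReal (Real.exp (-t)) := by
  have hexp : 3 ^ δ ≤ Real.exp t := by
    rw [Real.rpow_def_of_pos three_pos, mul_comm]
    exact Real.exp_le_exp.2 ht
  have hlevel : distribH n δ (fun x => |Real.log (maxOp n δ g x).toReal - Real.log m|) Q.toSet t ≤
      hContent n δ {x | x ∈ Q.toSet ∧ ENNReal.ofReal (m * Real.exp t) < maxOp n δ g x} := by
    refine hM.hContent_le hδ.ne' fun x ⟨hxQ, hx⟩ hfin => ⟨hxQ, ?_⟩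
    have hmx : m ≤ (maxOp n δ g x).toReal := (ENNReal.ofReal_le_iff_le_toReal hfin.ne).1 (hle x hxQ)
    beta_reduce at hx
    rw [abs_of_nonneg (sub_nonneg.2 (Real.log_le_log hm hmx)), lt_sub_iff_add_lt',
      Real.lt_log_iff_exp_lt (hm.trans_le hmx), Real.exp_add, Real.exp_log hm] at hx
    exact (ENNReal.ofReal_lt_iff_lt_toReal (by positivity) hfin.ne).2 hx
  rw [Real.exp_neg, ENNReal.ofReal_inv_of_pos (Real.exp_pos t), ← div_eq_mul_inv,
    ENNReal.le_div_iff_mul_le (.inl (ENNReal.ofReal_pos.2 (Real.exp_pos t)).ne')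
      (.inl ENNReal.ofReal_ne_top), mul_comm]
  exact (mul_le_mul_right hlevel _).trans (mul_hContent_lt_maxOp_le hδ hδn hm hexp hQ)

theorem exists_integH_abs_log_maxOp_sub_le (hδ : 0 < δ) (hδn : δ ≤ n)
    (hM : AEContent n δ fun x => maxOp n δ g x < ⊤) (Q : Cube n) :
    ∃ c : ℝ, integH n δ (fun x => |Real.log (maxOp n δ g x).toReal - c|) Q.toSet ≤
      (ENNReal.ofReal (δ * Real.log 3) + weakTypeConst δ) * Q.weight δ := by
  by_cases! hzero : ∀ x, maxOp n δ g x = 0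
  · exact ⟨0, by simp [hzero, integH_eq_zero, hContent_empty hδ.ne']⟩
  obtain ⟨x₀, hx₀⟩ := hzero
  let m := ⨅ y ∈ Q.toSet, maxOp n δ g y
  have hm0 : m ≠ 0 := by
    obtain ⟨c, hc0, hc⟩ := exists_pos_le_maxOp hδ hδn hx₀ Q.isBounded_toSet
    exact (hc0.bot_lt.trans_le (le_iInf₂ hc)).ne'
  have hmtop : m ≠ ⊤ := by
    obtain ⟨y, hy, hfin⟩ := hM.exists_mem_toSet hδ hδn Q
    exact ((iInf₂_le y hy).trans_lt hfin).ne
  have hm : ENNReal.ofReal m.toReal = m := ENNReal.ofReal_toReal hmtop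
  refine ⟨Real.log m.toReal, ?_⟩
  calc _ ≤ ENNReal.ofReal (δ * Real.log 3) * hContent n δ Q.toSet +
        weakTypeConst δ * ENNReal.ofReal (3 ^ δ) * Q.weight δ *
          ENNReal.ofReal (Real.exp (-(δ * Real.log 3))) :=
      integH_le_of_exp_tail (ENNReal.mul_ne_top
        (ENNReal.mul_ne_top weakTypeConst_ne_top ENNReal.ofReal_ne_top) Cube.weight_ne_top)
        fun t ht => distribH_abs_log_maxOp_sub_le hδ hδn hM (ENNReal.toReal_pos hm0 hmtop)
          (fun y hy => hm.trans_le (iInf₂_le y hy))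
          (fun P hP => by rw [hm]; exact integH_le_iInf_maxOp_mul_weight hδ hδn hP) ht.le
    _ = _ := by
      have hexp : Real.exp (-(δ * Real.log 3)) = (3 ^ δ)⁻¹ := by
        rw [Real.exp_neg, Real.rpow_def_of_pos three_pos, mul_comm]
      have hinv : ENNReal.ofReal (3 ^ δ) * ENNReal.ofReal (3 ^ δ)⁻¹ = 1 := by
        rw [← ENNReal.ofReal_mul (by positivity), mul_inv_cancel₀ (by positivity),
          ENNReal.ofReal_one]
      rw [hContent_toSet hδ hδn, hexp, mul_right_comm, mul_assoc (weakTypeConst δ), hinv, mul_one,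
        add_mul]

end MaximalOperator

section Semicontinuity

open Filter Topology

variable {n : ℕ} {δ : ℝ} {g : (Fin n → ℝ) → ℝ} {x : Fin n → ℝ}

lemma exists_one_lt_rpow_mul_lt {a b : ℝ≥0∞} (h : a < b) (δ : ℝ) :
    ∃ t > 1, ENNReal.ofReal (t ^ δ) * a < b := by
  have hcont : Tendsto (fun t : ℝ => t ^ δ) (𝓝 1) (𝓝 1) := by
    simpa using (Real.continuousAt_rpow_const 1 δ (.inl one_ne_zero)).tendsto
  have htend : Tendsto (fun t : ℝ => ENNReal.ofReal (t ^ δ) * a) (𝓝 1) (𝓝 a) := by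
    simpa using ENNReal.Tendsto.mul_const (ENNReal.tendsto_ofReal hcont) (.inr h.ne_top)
  obtain ⟨t, htb, ht⟩ := ((htend.mono_left nhdsWithin_le_nhds).eventually_lt_const h |>.and
    (self_mem_nhdsWithin : ∀ᶠ t in 𝓝[>] (1 : ℝ), t ∈ Ioi 1)).exists
  exact ⟨t, ht, htb⟩

theorem lowerSemicontinuous_maxOp (hδ : 0 < δ) (hδn : δ ≤ n) :
    LowerSemicontinuous (maxOp n δ g) := by
  intro x c hc
  obtain ⟨Q, hxQ, hQ⟩ := (lt_maxOp_iff hδ hδn).1 hc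
  obtain ⟨t, ht, htQ⟩ := exists_one_lt_rpow_mul_lt hQ δ
  have hr : 0 < (t - 1) / 2 * Q.side := mul_pos (by linarith) Q.side_pos
  filter_upwards [Metric.closedBall_mem_nhds x hr] with y hy
  refine (lt_maxOp_iff hδ hδn).2 ⟨_, Cube.mem_dilate_of_dist_le (one_pos.trans ht) hxQ hy, ?_⟩
  rw [Cube.weight_dilate, mul_left_comm]
  exact htQ.trans_le (integH_mono_set (Cube.subset_dilate ht.le))

/-- The mean oscillation of `g` over cubes not contained in `O` vanishes as the cubes shrink to a
point. For quasicontinuous `g` this takes the place of the Lebesgue differentiation theorem: it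
holds for open sets `O` of arbitrarily small content. -/
def HasVanishingOscillation (n : ℕ) (δ : ℝ) (g : (Fin n → ℝ) → ℝ) (O : Set (Fin n → ℝ)) : Prop :=
  ∀ x, ∀ θ > 0, ∃ c : ℝ, ∃ ρ > 0, ∀ Q : Cube n, Q.toSet ⊆ Metric.ball x ρ → ¬Q.toSet ⊆ O →
    integH n δ (fun y => |g y - c|) Q.toSet ≤ ENNReal.ofReal θ * Q.weight δ

lemma ofReal_abs_le_add_maxOp (hδ : 0 < δ) (hδn : δ ≤ n) {Q : Cube n} (hxQ : x ∈ Q.toSet)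
    {c θ : ℝ} (hθ₀ : 0 < θ) (hθ₁ : θ < 1)
    (hQ : integH n δ (fun y => |g y - c|) Q.toSet ≤ ENNReal.ofReal (θ ^ 2) * Q.weight δ) :
    ENNReal.ofReal |c| ≤ ENNReal.ofReal θ + ENNReal.ofReal (1 - θ)⁻¹ * maxOp n δ g x := by
  refine (ENNReal.mul_le_mul_iff_left (Cube.weight_ne_zero (Q := Q) (δ := δ))
    Cube.weight_ne_top).1 ?_
  calc ENNReal.ofReal |c| * Q.weight δ
      ≤ integH n δ (fun _ => |c|) Q.toSet := by
        rw [← hContent_toSet hδ hδn]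
        exact ofReal_mul_hContent_le_integH fun _ _ => le_rfl
    _ ≤ ENNReal.ofReal θ⁻¹ * integH n δ (fun y => |g y - c|) Q.toSet +
          ENNReal.ofReal (1 - θ)⁻¹ * integH n δ (fun y => |g y|) Q.toSet :=
        integH_le_of_le_add hδ.ne' hθ₀ hθ₁ fun y _ => by
          rw [abs_sub_comm]
          linarith [abs_sub_abs_le_abs_sub c (g y)]
    _ ≤ ENNReal.ofReal θ⁻¹ * (ENNReal.ofReal (θ ^ 2) * Q.weight δ) +
          ENNReal.ofReal (1 - θ)⁻¹ * (maxOp n δ g x * Q.weight δ) :=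
        add_le_add (mul_le_mul_right hQ _)
          (mul_le_mul_right (integH_le_maxOp_mul_weight hδ hδn hxQ) _)
    _ = _ := by
        rw [← mul_assoc, ← mul_assoc, ← add_mul, ← ENNReal.ofReal_mul (inv_pos.2 hθ₀).le, sq,
          inv_mul_cancel_left₀ hθ₀.ne']

lemma exists_ofReal_add_inv_mul_add_sq_lt {a b : ℝ≥0∞} (h : a < b) :
    ∃ θ : ℝ, 0 < θ ∧ θ < 1 ∧
      ENNReal.ofReal θ + ENNReal.ofReal (1 - θ)⁻¹ * a + ENNReal.ofReal (θ ^ 2) < b := by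
  have hinv : Tendsto (fun θ : ℝ => (1 - θ)⁻¹) (𝓝 0) (𝓝 1) := by
    have hcont : ContinuousAt (fun θ : ℝ => (1 - θ)⁻¹) 0 :=
      (continuousAt_const.sub continuousAt_id).inv₀ (by simp)
    simpa using hcont.tendsto
  have htend : Tendsto (fun θ : ℝ => ENNReal.ofReal θ + ENNReal.ofReal (1 - θ)⁻¹ * a +
      ENNReal.ofReal (θ ^ 2)) (𝓝 0) (𝓝 a) := by
    have hsq : Tendsto (fun θ : ℝ => θ ^ 2) (𝓝 0) (𝓝 0) := by
      simpa using (continuous_pow (M := ℝ) 2).tendsto 0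
    simpa using ((ENNReal.tendsto_ofReal tendsto_id).add (ENNReal.Tendsto.mul_const
      (ENNReal.tendsto_ofReal hinv) (.inr h.ne_top))).add (ENNReal.tendsto_ofReal hsq)
  obtain ⟨θ, hθb, hθ⟩ := ((htend.mono_left nhdsWithin_le_nhds).eventually_lt_const h |>.and
    (Ioo_mem_nhdsGT one_pos)).exists
  exact ⟨θ, hθ.1, hθ.2, hθb⟩

-- The cube of side `ρ / 2` with corner `x` compares the approximating constant with the maximal
-- function at `x`.
lemma HasVanishingOscillation.exists_integH_le_of_subset_ball (hδ : 0 < δ) (hδn : δ ≤ n)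
    {O : Set (Fin n → ℝ)} (hO : HasVanishingOscillation n δ g O) (hx : x ∉ O) {b : ℝ≥0∞}
    (hb : maxOp n δ g x < b) :
    ∃ ρ > 0, ∀ Q : Cube n, Q.toSet ⊆ Metric.ball x ρ → ¬Q.toSet ⊆ O →
      integH n δ (fun y => |g y|) Q.toSet ≤ b * Q.weight δ := by
  obtain ⟨θ, hθ₀, hθ₁, hθb⟩ := exists_ofReal_add_inv_mul_add_sq_lt hb
  obtain ⟨c, ρ, hρ, hc⟩ := hO x (θ ^ 2) (by positivity)
  let Q₀ : Cube n := ⟨x, ρ / 2, half_pos hρ⟩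
  have hQ₀ : Q₀.toSet ⊆ Metric.ball x ρ := fun y hy =>
    (Cube.dist_le_side hy Q₀.corner_mem).trans_lt (half_lt_self hρ)
  have hcM := ofReal_abs_le_add_maxOp hδ hδn Q₀.corner_mem hθ₀ hθ₁
    (hc Q₀ hQ₀ fun h => hx (h Q₀.corner_mem))
  refine ⟨ρ, hρ, fun Q hQ hQO => ?_⟩
  calc integH n δ (fun y => |g y|) Q.toSet
      ≤ ENNReal.ofReal |c| * hContent n δ Q.toSet +
          integH n δ (fun y => |g y - c|) Q.toSet :=
        integH_le_of_le_const_add fun y _ => by linarith [abs_sub_abs_le_abs_sub (g y) c]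
    _ ≤ ENNReal.ofReal |c| * Q.weight δ + ENNReal.ofReal (θ ^ 2) * Q.weight δ :=
        add_le_add (mul_le_mul_right (hContent_toSet_le_weight hδ.ne' Q) _) (hc Q hQ hQO)
    _ ≤ b * Q.weight δ := by
        rw [← add_mul]
        exact mul_le_mul_left ((add_le_add hcM le_rfl).trans hθb.le) _

lemma eventually_integH_le_of_le_side (hδ : 0 < δ) (hδn : δ ≤ n) {b : ℝ≥0∞}
    (hb : maxOp n δ g x < b) {ρ : ℝ} (hρ : 0 < ρ) :
    ∀ᶠ y in 𝓝 x, ∀ Q : Cube n, y ∈ Q.toSet → ρ ≤ Q.side →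
      integH n δ (fun y => |g y|) Q.toSet ≤ b * Q.weight δ := by
  obtain ⟨t, ht, htb⟩ := exists_one_lt_rpow_mul_lt hb δ
  have ht' : 0 ≤ (t - 1) / 2 := by linarith
  filter_upwards [Metric.closedBall_mem_nhds x (mul_pos (by linarith : 0 < (t - 1) / 2) hρ)]
    with y hy Q hyQ hQ
  have hxQ : x ∈ (Q.dilate t (one_pos.trans ht)).toSet := by
    refine Cube.mem_dilate_of_dist_le _ hyQ ?_
    rw [dist_comm]
    exact (Metric.mem_closedBall.1 hy).trans (mul_le_mul_of_nonneg_left hQ ht')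
  calc integH n δ (fun y => |g y|) Q.toSet
      ≤ maxOp n δ g x * (Q.dilate t (one_pos.trans ht)).weight δ :=
        (integH_mono_set (Cube.subset_dilate ht.le)).trans
          (integH_le_maxOp_mul_weight hδ hδn hxQ)
    _ = ENNReal.ofReal (t ^ δ) * maxOp n δ g x * Q.weight δ := by
        rw [Cube.weight_dilate]
        ring
    _ ≤ b * Q.weight δ := mul_le_mul_left htb.le _

theorem HasVanishingOscillation.upperSemicontinuousOn_maxOp (hδ : 0 < δ) (hδn : δ ≤ n)
    {O : Set (Fin n → ℝ)} (hO : HasVanishingOscillation n δ g O) :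
    UpperSemicontinuousOn (maxOp n δ g) Oᶜ := by
  intro x hx b hb
  obtain ⟨b', hxb', hb'⟩ := exists_between hb
  obtain ⟨ρ, hρ, hsmall⟩ := hO.exists_integH_le_of_subset_ball hδ hδn hx hxb'
  have hlarge := eventually_integH_le_of_le_side hδ hδn hxb' (half_pos hρ)
  filter_upwards [nhdsWithin_le_nhds hlarge, self_mem_nhdsWithin,
    nhdsWithin_le_nhds (Metric.ball_mem_nhds x (half_pos hρ))] with y hylarge hyO hy
  refine ((maxOp_le_iff hδ hδn).2 fun Q hyQ => ?_).trans_lt hb'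
  rcases le_or_gt (ρ / 2) Q.side with hQ | hQ
  · exact hylarge Q hyQ hQ
  · refine hsmall Q (fun z hz => ?_) fun hQO => hyO (hQO hyQ)
    have hzy := Cube.dist_le_side hz hyQ
    have hyx := Metric.mem_ball.1 hy
    exact Metric.mem_ball.2 (by linarith [dist_triangle z y x])

lemma HasVanishingOscillation.continuousOn_maxOp (hδ : 0 < δ) (hδn : δ ≤ n)
    {O : Set (Fin n → ℝ)} (hO : HasVanishingOscillation n δ g O) :
    ContinuousOn (maxOp n δ g) Oᶜ :=
  continuousOn_iff_lower_upperSemicontinuousOn.2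
    ⟨(lowerSemicontinuous_maxOp hδ hδn).lowerSemicontinuousOn _,
      hO.upperSemicontinuousOn_maxOp hδ hδn⟩

end Semicontinuity

section Quasicontinuity

variable {n : ℕ} {δ : ℝ} {f g u : (Fin n → ℝ) → ℝ} {A O : Set (Fin n → ℝ)}

lemma QuasiCont.exists_isOpen (hf : QuasiCont n δ f) {ε : ℝ≥0∞} (hε : ε ≠ 0) :
    ∃ O, IsOpen O ∧ hContent n δ O < ε ∧ ContinuousOn f Oᶜ := by
  obtain ⟨r, hr, hrε⟩ := ENNReal.lt_iff_exists_nnreal_btwn.1 hε.bot_lt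
  obtain ⟨O, hO, hOr, hfO⟩ := hf r (ENNReal.coe_pos.1 hr)
  exact ⟨O, hO, (hOr.trans_eq (ENNReal.ofReal_coe_nnreal)).trans hrε, hfO⟩

lemma QuasiCont.const_mul (hf : QuasiCont n δ f) (a : ℝ) : QuasiCont n δ fun x => a * f x :=
  fun ε hε => by
    obtain ⟨O, hO, hOε, hfO⟩ := hf ε hε
    exact ⟨O, hO, hOε, continuousOn_const.mul hfO⟩

lemma QuasiCont.add (hδ : δ ≠ 0) (hf : QuasiCont n δ f) (hg : QuasiCont n δ g) :
    QuasiCont n δ fun x => f x + g x := fun ε hε => by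
  obtain ⟨O, hO, hOε, hfO⟩ := hf (ε / 2) (half_pos hε)
  obtain ⟨P, hP, hPε, hgP⟩ := hg (ε / 2) (half_pos hε)
  refine ⟨O ∪ P, hO.union hP, (hContent_union_le hδ O P).trans_lt ?_, ?_⟩
  · rw [← add_halves ε, ENNReal.ofReal_add (half_pos hε).le (half_pos hε).le]
    exact ENNReal.add_lt_add hOε hPε
  · rw [compl_union]
    exact (hfO.mono inter_subset_left).add (hgP.mono inter_subset_right)

lemma integH_max_zero : integH n δ (fun x => max (u x) 0) A = integH n δ u A :=
  setLIntegral_congr_fun measurableSet_Ioi fun t ht => by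
    simp only [lt_max_iff, (mem_Ioi.1 ht).not_gt, or_false]

lemma integH_indicator_le : integH n δ (O.indicator u) A ≤ integH n δ u O :=
  setLIntegral_mono' measurableSet_Ioi fun t ht => hContent_mono fun x hx => by
    have hxO : x ∈ O := by
      by_contra hxO
      exact (mem_Ioi.1 ht).not_gt (by simpa [hxO] using hx.2)
    exact ⟨hxO, by simpa [hxO] using hx.2⟩

lemma integH_const_le (hδ : δ ≠ 0) (c : ℝ) :
    integH n δ (fun _ => c) A ≤ ENNReal.ofReal c * hContent n δ A :=
  integH_le_of_ae_le (by simp [hContent_empty hδ])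

lemma exists_continuous_eq_clamp (hO : IsOpen O) (hg : ContinuousOn g Oᶜ) {T : ℝ} (hT : 0 ≤ T) :
    ∃ φ : (Fin n → ℝ) → ℝ, Continuous φ ∧ (∀ x, |φ x| ≤ T) ∧
      ∀ x ∉ O, φ x = max (-T) (min (g x) T) := by
  have hclamp (x) : max (-T) (min (g x) T) ∈ Icc (-T) T :=
    ⟨le_max_left _ _, max_le (by linarith) (min_le_right _ _)⟩
  obtain ⟨φ, hφ, hφeq⟩ := ContinuousMap.exists_extension_forall_mem_of_isClosedEmbedding
    (X := ↥(Oᶜ)) (t := Icc (-T) T) ⟨fun x => max (-T) (min (g x) T), continuous_const.max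
      ((continuousOn_iff_continuous_domRestrict.1 hg).min continuous_const)⟩
    (fun x => hclamp x) ⟨0, by simpa using hT⟩ hO.isClosed_compl.isClosedEmbedding_subtypeVal
  exact ⟨φ, φ.continuous, fun x => abs_le.2 (hφ x), fun x hx => congrFun hφeq ⟨x, hx⟩⟩

lemma abs_sub_clamp_le (a : ℝ) {T : ℝ} (hT : 0 ≤ T) :
    |a - max (-T) (min a T)| ≤ max (|a| - T) 0 := by
  grind

lemma MemL1loc.exists_continuous_integH_abs_sub_le (hδ : δ ≠ 0) (hg : MemL1loc n δ g)
    (hA : IsCompact A) {κ : ℝ≥0∞} (hκ : κ ≠ 0) :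
    ∃ φ : (Fin n → ℝ) → ℝ, Continuous φ ∧ integH n δ (fun x => |g x - φ x|) A ≤ κ := by
  have hκ4 : κ / 2 / 2 ≠ 0 := by simp [hκ]
  obtain ⟨T, hT, hTκ⟩ := exists_integH_sub_const_lt (hg.2 A hA).ne hκ4
  have hε : κ / 2 / 2 / ENNReal.ofReal (2 * T) ≠ 0 :=
    (ENNReal.div_pos hκ4 ENNReal.ofReal_ne_top).ne'
  obtain ⟨O, hO, hOκ, hgO⟩ := hg.1.exists_isOpen hε
  obtain ⟨φ, hφ, hφT, hφeq⟩ := exists_continuous_eq_clamp hO hgO hT.le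
  refine ⟨φ, hφ, ?_⟩
  have hpoint (x) : |g x - φ x| ≤ max (|g x| - T) 0 + O.indicator (fun _ => 2 * T) x := by
    by_cases hx : x ∈ O
    · rw [indicator_of_mem hx]
      linarith [abs_sub (g x) (φ x), hφT x, le_max_left (|g x| - T) 0]
    · rw [indicator_of_notMem hx, add_zero, hφeq x hx]
      exact abs_sub_clamp_le (g x) hT.le
  have hind : integH n δ (O.indicator fun _ => 2 * T) A ≤ κ / 2 / 2 := calc
    _ ≤ ENNReal.ofReal (2 * T) * hContent n δ O :=
      integH_indicator_le.trans (integH_const_le hδ (2 * T))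
    _ ≤ _ := ENNReal.mul_le_of_le_div' hOκ.le
  calc integH n δ (fun x => |g x - φ x|) A
      ≤ 2 * integH n δ (fun x => max (|g x| - T) 0) A +
          2 * integH n δ (O.indicator fun _ => 2 * T) A :=
        (integH_mono_fun fun x _ => hpoint x).trans (integH_add_le hδ)
    _ ≤ 2 * (κ / 2 / 2) + 2 * (κ / 2 / 2) := by
        rw [integH_max_zero]
        gcongr
    _ = κ := by
        rw [ENNReal.mul_div_cancel two_ne_zero ENNReal.ofNat_ne_top, ENNReal.add_halves]

lemma MemL1loc.exists_isOpen_integH_abs_sub_le (hδ : 0 < δ) (hg : MemL1loc n δ g)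
    (hA : IsCompact A) {θ : ℝ} (hθ : 0 < θ) {ε : ℝ≥0∞} (hε : ε ≠ 0) :
    ∃ (φ : (Fin n → ℝ) → ℝ) (O : Set (Fin n → ℝ)), Continuous φ ∧ IsOpen O ∧ hContent n δ O < ε ∧
      ∀ Q : Cube n, Q.toSet ⊆ A → ¬Q.toSet ⊆ O →
        integH n δ (fun x => |g x - φ x|) Q.toSet ≤ ENNReal.ofReal θ * Q.weight δ := by
  have hθ' : ENNReal.ofReal θ ≠ 0 := (ENNReal.ofReal_pos.2 hθ).ne'
  obtain ⟨κ, hκ, hκε⟩ := ENNReal.exists_nnreal_pos_mul_lt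
    (ENNReal.mul_ne_top ENNReal.ofReal_ne_top weakTypeConst_ne_top :
      ENNReal.ofReal (3 ^ δ) * weakTypeConst δ ≠ ⊤) (mul_ne_zero hθ' hε)
  obtain ⟨φ, hφ, hφκ⟩ := hg.exists_continuous_integH_abs_sub_le hδ.ne' hA
    (ENNReal.coe_pos.2 hκ).ne'
  let E := largeAverageSet n δ (fun x => |g x - φ x|) A θ
  have hE : ENNReal.ofReal (3 ^ δ) * hContent n δ E < ε := by
    refine lt_of_mul_lt_mul_left' (a := ENNReal.ofReal θ) (lt_of_le_of_lt ?_ hκε)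
    calc ENNReal.ofReal θ * (ENNReal.ofReal (3 ^ δ) * hContent n δ E)
        = ENNReal.ofReal (3 ^ δ) * (ENNReal.ofReal θ * hContent n δ E) := by ring
      _ ≤ ENNReal.ofReal (3 ^ δ) * (weakTypeConst δ * κ) :=
          mul_le_mul_right ((mul_hContent_largeAverageSet_le hδ hθ).trans
            (mul_le_mul_right hφκ _)) _
      _ = κ * (ENNReal.ofReal (3 ^ δ) * weakTypeConst δ) := by ring
  obtain ⟨O, hO, hEO, hOε⟩ := exists_isOpen_superset_hContent_lt hδ.ne' hE
  refine ⟨φ, O, hφ, hO, hOε, fun Q hQA hQO => ?_⟩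
  by_contra! hQ
  exact hQO fun x hx => hEO ⟨Q, hx, hQA, hQ⟩

theorem MemL1loc.exists_isOpen_hasVanishingOscillation (hδ : 0 < δ) (hg : MemL1loc n δ g)
    {ε : ℝ≥0∞} (hε : ε ≠ 0) :
    ∃ O, IsOpen O ∧ hContent n δ O < ε ∧ HasVanishingOscillation n δ g O := by
  obtain ⟨e, he, hsum⟩ := ENNReal.exists_pos_sum_of_countable hε ℕ
  choose φ O hφ hO hOe hosc using fun k : ℕ =>
    hg.exists_isOpen_integH_abs_sub_le hδ (isCompact_closedBall 0 (k : ℝ))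
      (Nat.one_div_pos_of_nat (n := k)) (ENNReal.coe_pos.2 (he k)).ne'
  refine ⟨⋃ k, O k, isOpen_iUnion hO, ?_, fun x θ hθ => ?_⟩
  · exact (hContent_iUnion_le hδ.ne' O).trans_lt
      ((ENNReal.tsum_le_tsum fun k => (hOe k).le).trans_lt hsum)
  obtain ⟨k, hkx, hkθ⟩ : ∃ k : ℕ, ‖x‖ + 1 ≤ k ∧ 1 / ((k : ℝ) + 1) ≤ θ / 2 := by
    obtain ⟨i, hi⟩ := exists_nat_ge (‖x‖ + 1)
    obtain ⟨j, hj⟩ := exists_nat_one_div_lt (half_pos hθ)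
    refine ⟨max i j, hi.trans (by simp), (Nat.one_div_le_one_div (le_max_right i j)).trans hj.le⟩
  obtain ⟨ρ, hρ, hφρ⟩ := Metric.continuous_iff.1 (hφ k) x (θ / 2) (half_pos hθ)
  refine ⟨φ k x, min ρ 1, lt_min hρ one_pos, fun Q hQ hQO => ?_⟩
  have hQk : Q.toSet ⊆ Metric.closedBall 0 k :=
    (hQ.trans (Metric.ball_subset_ball (min_le_right ρ 1))).trans <|
      Metric.ball_subset_closedBall.trans (Metric.closedBall_subset_closedBall'
        (by rw [dist_zero_right]; linarith))
  calc integH n δ (fun y => |g y - φ k x|) Q.toSet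
      ≤ ENNReal.ofReal (θ / 2) * hContent n δ Q.toSet +
          integH n δ (fun y => |g y - φ k y|) Q.toSet :=
        integH_le_of_le_const_add fun y hy => by
          have hy' := (hφρ y ((hQ hy).trans_le (min_le_left ρ 1))).le
          rw [Real.dist_eq] at hy'
          linarith [abs_sub_le (g y) (φ k y) (φ k x)]
    _ ≤ ENNReal.ofReal (θ / 2) * Q.weight δ + ENNReal.ofReal (θ / 2) * Q.weight δ :=
        add_le_add (mul_le_mul_right (hContent_toSet_le_weight hδ.ne' Q) _) <|
          (hosc k Q hQk fun h => hQO (h.trans (subset_iUnion O k))).trans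
            (mul_le_mul_left (ENNReal.ofReal_le_ofReal hkθ) _)
    _ = ENNReal.ofReal θ * Q.weight δ := by
        rw [← add_mul, ← ENNReal.ofReal_add (half_pos hθ).le (half_pos hθ).le, add_halves]

theorem quasiCont_log_maxOp (hδ : 0 < δ) (hδn : δ ≤ n) (hg : MemL1loc n δ g)
    (hM : AEContent n δ fun x => maxOp n δ g x < ⊤) :
    QuasiCont n δ fun x => Real.log (maxOp n δ g x).toReal := by
  intro ε hε
  by_cases! hzero : ∀ x, maxOp n δ g x = 0
  · exact ⟨∅, isOpen_empty, by simpa [hContent_empty hδ.ne'],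
      by simpa only [hzero] using continuousOn_const⟩
  obtain ⟨x₀, hx₀⟩ := hzero
  have hne (x) : maxOp n δ g x ≠ 0 := by
    obtain ⟨c, hc0, hc⟩ := exists_pos_le_maxOp hδ hδn hx₀ (Bornology.isBounded_singleton (x := x))
    exact (hc0.bot_lt.trans_le (hc x rfl)).ne'
  have hε2 : ENNReal.ofReal (ε / 2) ≠ 0 := (ENNReal.ofReal_pos.2 (half_pos hε)).ne'
  obtain ⟨O, hO, hOε, hosc⟩ := hg.exists_isOpen_hasVanishingOscillation hδ hε2
  obtain ⟨P, hP, htop, hPε⟩ := exists_isOpen_superset_hContent_lt hδ.ne'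
    (E := {x | ¬maxOp n δ g x < ⊤}) (ε := ENNReal.ofReal (ε / 2))
    (by rw [show hContent n δ _ = 0 from hM, mul_zero]; exact hε2.bot_lt)
  refine ⟨O ∪ P, hO.union hP, (hContent_union_le hδ.ne' O P).trans_lt ?_, ?_⟩
  · rw [← add_halves ε, ENNReal.ofReal_add (half_pos hε).le (half_pos hε).le]
    exact ENNReal.add_lt_add hOε hPε
  have hfin : ∀ x ∈ (O ∪ P)ᶜ, maxOp n δ g x ≠ ⊤ := fun x hx h => hx (.inr (htop (by simp [h])))
  refine ContinuousOn.log (ENNReal.continuousOn_toReal.comp ?_ hfin) fun x hx =>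
    (ENNReal.toReal_pos (hne x) (hfin x hx)).ne'
  exact (hosc.continuousOn_maxOp hδ hδn).mono (compl_subset_compl.2 subset_union_left)

end Quasicontinuity

section BMO

variable {n : ℕ} {δ : ℝ} {b f g g₁ g₂ : (Fin n → ℝ) → ℝ}

lemma memBMO_of_exists_integH_abs_sub_le (hδ : 0 < δ) (hδn : δ ≤ n) (hf : QuasiCont n δ f)
    {K : ℝ≥0∞} (hK : K ≠ ⊤)
    (h : ∀ Q : Cube n, ∃ c, integH n δ (fun x => |f x - c|) Q.toSet ≤ K * Q.weight δ) :
    MemBMO n δ f := by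
  refine ⟨⟨hf, fun A hA => ?_⟩, lt_of_le_of_lt (iSup_le fun Q => ?_) hK.lt_top⟩
  · obtain ⟨Q, hAQ⟩ := Cube.exists_superset hA.isBounded
    obtain ⟨c, hc⟩ := h Q
    calc integH n δ (fun x => |f x|) A
        ≤ ENNReal.ofReal |c| * hContent n δ Q.toSet +
            integH n δ (fun x => |f x - c|) Q.toSet :=
          (integH_mono_set hAQ).trans <| integH_le_of_le_const_add fun x _ => by
            linarith [abs_sub_abs_le_abs_sub (f x) c]
      _ ≤ ENNReal.ofReal |c| * Q.weight δ + K * Q.weight δ :=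
          add_le_add (mul_le_mul_right (hContent_toSet_le_weight hδ.ne' Q) _) hc
      _ < ⊤ := ENNReal.add_lt_top.2 ⟨ENNReal.mul_lt_top ENNReal.ofReal_lt_top
          Cube.weight_ne_top.lt_top, ENNReal.mul_lt_top hK.lt_top Cube.weight_ne_top.lt_top⟩
  · obtain ⟨c, hc⟩ := h Q
    rw [← hContent_toSet hδ hδn] at hc
    exact (iInf_le _ c).trans (ENNReal.div_le_of_le_mul hc)

lemma MemBMO.exists_integH_abs_sub_le (hδ : 0 < δ) (hδn : δ ≤ n) (hf : MemBMO n δ f) :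
    ∃ K : ℝ≥0∞, K ≠ ⊤ ∧
      ∀ Q : Cube n, ∃ c, integH n δ (fun x => |f x - c|) Q.toSet ≤ K * Q.weight δ := by
  refine ⟨bmoNorm n δ f + 1, by finiteness [hf.2.ne], fun Q => ?_⟩
  obtain ⟨c, hc⟩ := iInf_lt_iff.1 <| (le_iSup (fun Q : Cube n => ⨅ c : ℝ,
    integH n δ (fun x => |f x - c|) Q.toSet / hContent n δ Q.toSet) Q).trans_lt
      (ENNReal.lt_add_right hf.2.ne one_ne_zero)
  rw [hContent_toSet hδ hδn] at hc
  exact ⟨c, (ENNReal.div_le_iff Cube.weight_ne_zero Cube.weight_ne_top).1 hc.le⟩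

lemma MemBMO.const_mul (hδ : 0 < δ) (hδn : δ ≤ n) (hf : MemBMO n δ f) (a : ℝ) :
    MemBMO n δ fun x => a * f x := by
  obtain ⟨K, hK, h⟩ := hf.exists_integH_abs_sub_le hδ hδn
  refine memBMO_of_exists_integH_abs_sub_le hδ hδn (hf.1.1.const_mul a)
    (ENNReal.mul_ne_top ENNReal.ofReal_ne_top hK : ENNReal.ofReal |a| * K ≠ ⊤) fun Q => ?_
  obtain ⟨c, hc⟩ := h Q
  refine ⟨a * c, ?_⟩
  simp only [← mul_sub, abs_mul, integH_const_mul hδ.ne' (abs_nonneg a), mul_assoc]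
  exact mul_le_mul_right hc _

lemma MemBMO.add (hδ : 0 < δ) (hδn : δ ≤ n) (hf : MemBMO n δ f) (hg : MemBMO n δ g) :
    MemBMO n δ fun x => f x + g x := by
  obtain ⟨K, hK, hfK⟩ := hf.exists_integH_abs_sub_le hδ hδn
  obtain ⟨L, hL, hgL⟩ := hg.exists_integH_abs_sub_le hδ hδn
  refine memBMO_of_exists_integH_abs_sub_le hδ hδn (hf.1.1.add hδ.ne' hg.1.1)
    (by finiteness : 2 * K + 2 * L ≠ ⊤) fun Q => ?_
  obtain ⟨c, hc⟩ := hfK Q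
  obtain ⟨d, hd⟩ := hgL Q
  refine ⟨c + d, ?_⟩
  calc integH n δ (fun x => |f x + g x - (c + d)|) Q.toSet
      ≤ 2 * integH n δ (fun x => |f x - c|) Q.toSet +
          2 * integH n δ (fun x => |g x - d|) Q.toSet :=
        (integH_mono_fun fun x _ => by
          rw [add_sub_add_comm]
          exact abs_add_le _ _).trans (integH_add_le hδ.ne')
    _ ≤ 2 * (K * Q.weight δ) + 2 * (L * Q.weight δ) := by gcongr
    _ = (2 * K + 2 * L) * Q.weight δ := by ring

lemma MemLinf.memBMO (hδ : 0 < δ) (hδn : δ ≤ n) (hf : MemLinf n δ f) : MemBMO n δ f := by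
  obtain ⟨hfq, M, hM⟩ := hf
  refine memBMO_of_exists_integH_abs_sub_le hδ hδn hfq (K := ENNReal.ofReal M)
    ENNReal.ofReal_ne_top fun Q => ⟨0, ?_⟩
  simp only [sub_zero]
  refine (integH_le_of_ae_le ?_).trans (mul_le_mul_right (hContent_toSet_le_weight hδ.ne' Q) _)
  exact nonpos_iff_eq_zero.1 ((hContent_mono fun x hx => hx.2.not_ge).trans_eq hM)

theorem memBMO_log_maxOp (hδ : 0 < δ) (hδn : δ ≤ n) (hg : MemL1loc n δ g)
    (hM : AEContent n δ fun x => maxOp n δ g x < ⊤) :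
    MemBMO n δ fun x => Real.log (maxOp n δ g x).toReal :=
  memBMO_of_exists_integH_abs_sub_le hδ hδn (quasiCont_log_maxOp hδ hδn hg hM)
    (ENNReal.add_ne_top.2 ⟨ENNReal.ofReal_ne_top, weakTypeConst_ne_top⟩)
    (exists_integH_abs_log_maxOp_sub_le hδ hδn hM)

theorem stmt8_general (hδ : 0 < δ) (hδn : δ ≤ n) (α β : ℝ) (hb : MemBMO n δ b)
    (hg₁ : MemL1loc n δ g₁) (hg₂ : MemL1loc n δ g₂)
    (hM₁ : AEContent n δ fun x => maxOp n δ g₁ x < ⊤)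
    (hM₂ : AEContent n δ fun x => maxOp n δ g₂ x < ⊤) :
    MemBMO n δ fun x =>
      α * Real.log (maxOp n δ g₁ x).toReal + β * Real.log (maxOp n δ g₂ x).toReal + b x :=
  have h₁ := (memBMO_log_maxOp hδ hδn hg₁ hM₁).const_mul hδ hδn α
  have h₂ := (memBMO_log_maxOp hδ hδn hg₂ hM₂).const_mul hδ hδn β
  (h₁.add hδ hδn h₂).add hδ hδn hb

end BMO

/-- converse factorization for BMO(ℝⁿ, ℋ^δ_∞). -/
theorem stmt8 (n : ℕ) (hn : 1 ≤ n) (δ : ℝ) (hδ0 : 0 < δ) (hδn : δ ≤ n)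
    (α β : ℝ) (hα : 0 ≤ α) (hβ : 0 ≤ β)
    (b g₁ g₂ : (Fin n → ℝ) → ℝ) (hb : MemLinf n δ b)
    (hg₁ : MemL1loc n δ g₁) (hg₂ : MemL1loc n δ g₂)
    (hM₁ : AEContent n δ (fun x => maxOp n δ g₁ x < ⊤))
    (hM₂ : AEContent n δ (fun x => maxOp n δ g₂ x < ⊤))
    (hqc : QuasiCont n δ (fun x =>
      Real.exp (b x) * (maxOp n δ g₁ x).toReal ^ α * (maxOp n δ g₂ x).toReal ^ β)) :
    MemBMO n δ (fun x =>
      α * Real.log (maxOp n δ g₁ x).toReal + β * Real.log (maxOp n δ g₂ x).toReal + b x) :=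
  stmt8_general hδ0 hδn α β (hb.memBMO hδ0 hδn) hg₁ hg₂ hM₁ hM₂
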